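/- Let α ∈ ℕ^+, f = z(z+α). Then Ext¹ in the graded category between X = (A/(x,z+α)A)⟨−α⟩ and Y = (A/(y,z−1)A)⟨1⟩ vanishes in both directions, Ext¹_A(S,S) = 0 for S ∈ {X, Y, Z}, and Ext¹_A(X,Z) = Ext¹_A(Z,X) = Ext¹_A(Y,Z) = Ext¹_A(Z,Y) = k, concentrated in degree 0, where Z = A/(y^α,x,z)A. -/

import Mathlib

open Polynomial

noncomputable section

/-- The defining relations of the generalized Weyl algebra `A(f)` over `k[z]` with
`σ(z) = z + 1`: `xz = σ(z)x`, `yz = σ⁻¹(z)y`, `xy = f`, `yx = σ⁻¹(f)`.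
Generators: `0 ↦ x`, `1 ↦ y`, `2 ↦ z`. -/
inductive gwaRel (k : Type) [Field k] (f : Polynomial k) :
    FreeAlgebra k (Fin 3) → FreeAlgebra k (Fin 3) → Prop
  | xz : gwaRel k f (FreeAlgebra.ι k 0 * FreeAlgebra.ι k 2)
      ((FreeAlgebra.ι k 2 + 1) * FreeAlgebra.ι k 0)
  | yz : gwaRel k f (FreeAlgebra.ι k 1 * FreeAlgebra.ι k 2)
      ((FreeAlgebra.ι k 2 - 1) * FreeAlgebra.ι k 1)
  | xy : gwaRel k f (FreeAlgebra.ι k 0 * FreeAlgebra.ι k 1)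
      (aeval (FreeAlgebra.ι k 2) f)
  | yx : gwaRel k f (FreeAlgebra.ι k 1 * FreeAlgebra.ι k 0)
      (aeval (FreeAlgebra.ι k 2) (f.comp (X - 1)))

/-- The generalized Weyl algebra `A(f) = k[z]⟨x,y⟩ / (xz-σ(z)x, yz-σ⁻¹(z)y, xy-f, yx-σ⁻¹(f))`. -/
abbrev GWA (k : Type) [Field k] (f : Polynomial k) := RingQuot (gwaRel k f)

def gwaX (k : Type) [Field k] (f : Polynomial k) : GWA k f :=
  RingQuot.mkAlgHom k (gwaRel k f) (FreeAlgebra.ι k 0)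

def gwaY (k : Type) [Field k] (f : Polynomial k) : GWA k f :=
  RingQuot.mkAlgHom k (gwaRel k f) (FreeAlgebra.ι k 1)

def gwaZ (k : Type) [Field k] (f : Polynomial k) : GWA k f :=
  RingQuot.mkAlgHom k (gwaRel k f) (FreeAlgebra.ι k 2)

/-- The canonical `k[z]`-module generator of the degree-`n` component of `A(f)`:
`xⁿ` for `n ≥ 0` and `y⁻ⁿ` for `n < 0`. -/
def gwaMon (k : Type) [Field k] (f : Polynomial k) (n : ℤ) : GWA k f :=
  if 0 ≤ n then gwaX k f ^ n.toNat else gwaY k f ^ (-n).toNat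

/-- The degree-`n` component of `A(f)` (as a `k`-subspace): the left `k[z]`-span of the
canonical monomial `mₙ`. -/
def gwaComp (k : Type) [Field k] (f : Polynomial k) (n : ℤ) : Submodule k (GWA k f) :=
  Submodule.span k {w | ∃ q : Polynomial k, w = aeval (gwaZ k f) q * gwaMon k f n}

variable (k : Type) [Field k] (f : Polynomial k)

/-- The degree-`n` component of the shifted graded quotient module `(A(f)/I)⟨s⟩`:
the image of `A(f)_{n−s}` under the quotient map. -/
def qgrade (I : Submodule (GWA k f)ᵐᵒᵖ (GWA k f)) (s n : ℤ) :
    Set (GWA k f ⧸ I) :=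
  Submodule.Quotient.mk '' ((gwaComp k f (n - s) : Set (GWA k f)))

/-- `gE` is a `ℤ`-grading of the right `A(f)`-module `E`: the components are additive
subgroups, every element decomposes as a finite sum of homogeneous components, such a
decomposition is unique, and `E_n · A_i ⊆ E_{n+i}`. -/
def IsGrading (E : ModuleCat.{0} (GWA k f)ᵐᵒᵖ) (gE : ℤ → Set E) : Prop :=
  (∀ n, (0 : E) ∈ gE n) ∧
  (∀ n, ∀ a ∈ gE n, ∀ b ∈ gE n, a + b ∈ gE n) ∧
  (∀ n, ∀ a ∈ gE n, -a ∈ gE n) ∧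
  (∀ e : E, ∃ (s : Finset ℤ) (cc : ℤ → E), (∀ n, cc n ∈ gE n) ∧ e = ∑ n ∈ s, cc n) ∧
  (∀ (s : Finset ℤ) (cc : ℤ → E), (∀ n ∈ s, cc n ∈ gE n) →
    ∑ n ∈ s, cc n = 0 → ∀ n ∈ s, cc n = 0) ∧
  (∀ n i : ℤ, ∀ e ∈ gE n, ∀ a ∈ gwaComp k f i, (MulOpposite.op a) • e ∈ gE (n + i))

/-- `(E, gE, ι, π)` is a graded extension `0 → (A/I_T)⟨t+d⟩ → E → (A/I_S)⟨s⟩ → 0` in the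
category of graded right `A(f)`-modules (all maps of degree zero): here `I_T, t` define
the graded module `T = (A/I_T)⟨t⟩`, `I_S, s` define `S = (A/I_S)⟨s⟩`, and `d` is the
degree of the shift applied to `T`. -/
def IsGradedExt (IT : Submodule (GWA k f)ᵐᵒᵖ (GWA k f)) (t : ℤ)
    (IS : Submodule (GWA k f)ᵐᵒᵖ (GWA k f)) (s : ℤ) (d : ℤ)
    (E : ModuleCat.{0} (GWA k f)ᵐᵒᵖ) (gE : ℤ → Set E)
    (ι : (GWA k f ⧸ IT) →ₗ[(GWA k f)ᵐᵒᵖ] E)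
    (π : E →ₗ[(GWA k f)ᵐᵒᵖ] (GWA k f ⧸ IS)) : Prop :=
  IsGrading k f E gE ∧ Function.Injective ι ∧ Function.Surjective π ∧
  LinearMap.range ι = LinearMap.ker π ∧
  (∀ n, ι '' qgrade k f IT t (n - d) ⊆ gE n) ∧
  (∀ n, π '' gE n ⊆ qgrade k f IS s n)

/-- The graded extension splits (by a degree-zero section). -/
def GradedSplits (IS : Submodule (GWA k f)ᵐᵒᵖ (GWA k f)) (s : ℤ)
    (E : ModuleCat.{0} (GWA k f)ᵐᵒᵖ) (gE : ℤ → Set E)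
    (π : E →ₗ[(GWA k f)ᵐᵒᵖ] (GWA k f ⧸ IS)) : Prop :=
  ∃ sec : (GWA k f ⧸ IS) →ₗ[(GWA k f)ᵐᵒᵖ] E,
    π.comp sec = LinearMap.id ∧ ∀ n, sec '' qgrade k f IS s n ⊆ gE n

/-- `Ext¹_A(S, T) = 0` (as a graded vector space): every graded extension
`0 → T⟨d⟩ → E → S → 0` splits, for every degree `d`. -/
def ExtVanishes (IT : Submodule (GWA k f)ᵐᵒᵖ (GWA k f)) (t : ℤ)
    (IS : Submodule (GWA k f)ᵐᵒᵖ (GWA k f)) (s : ℤ) : Prop :=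
  ∀ (d : ℤ) (E : ModuleCat.{0} (GWA k f)ᵐᵒᵖ) (gE : ℤ → Set E)
    (ι : (GWA k f ⧸ IT) →ₗ[(GWA k f)ᵐᵒᵖ] E)
    (π : E →ₗ[(GWA k f)ᵐᵒᵖ] (GWA k f ⧸ IS)),
    IsGradedExt k f IT t IS s d E gE ι π → GradedSplits k f IS s E gE π

/-- `Ext¹_A(S, T) = k`, concentrated in degree `0` (as a graded vector space):
every graded extension `0 → T⟨d⟩ → E → S → 0` with `d ≠ 0` splits; there is a nonsplit
graded extension in degree `0`; and any two nonsplit graded extensions in degree `0`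
are equivalent up to a nonzero scalar `c ∈ k^×` (there is a degree-zero homomorphism of
extensions which is `c·id` on `T`; such extensions represent proportional classes, so
the degree-`0` component of `Ext¹` is one-dimensional). -/
def ExtOneDim (IT : Submodule (GWA k f)ᵐᵒᵖ (GWA k f)) (t : ℤ)
    (IS : Submodule (GWA k f)ᵐᵒᵖ (GWA k f)) (s : ℤ) : Prop :=
  (∀ (d : ℤ), d ≠ 0 → ∀ (E : ModuleCat.{0} (GWA k f)ᵐᵒᵖ) (gE : ℤ → Set E)
    (ι : (GWA k f ⧸ IT) →ₗ[(GWA k f)ᵐᵒᵖ] E)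
    (π : E →ₗ[(GWA k f)ᵐᵒᵖ] (GWA k f ⧸ IS)),
    IsGradedExt k f IT t IS s d E gE ι π → GradedSplits k f IS s E gE π) ∧
  (∃ (E : ModuleCat.{0} (GWA k f)ᵐᵒᵖ) (gE : ℤ → Set E)
    (ι : (GWA k f ⧸ IT) →ₗ[(GWA k f)ᵐᵒᵖ] E)
    (π : E →ₗ[(GWA k f)ᵐᵒᵖ] (GWA k f ⧸ IS)),
    IsGradedExt k f IT t IS s 0 E gE ι π ∧ ¬GradedSplits k f IS s E gE π) ∧
  (∀ (E : ModuleCat.{0} (GWA k f)ᵐᵒᵖ) (gE : ℤ → Set E)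
    (ι : (GWA k f ⧸ IT) →ₗ[(GWA k f)ᵐᵒᵖ] E)
    (π : E →ₗ[(GWA k f)ᵐᵒᵖ] (GWA k f ⧸ IS)),
    IsGradedExt k f IT t IS s 0 E gE ι π → ¬GradedSplits k f IS s E gE π →
    ∀ (E' : ModuleCat.{0} (GWA k f)ᵐᵒᵖ) (gE' : ℤ → Set E')
      (ι' : (GWA k f ⧸ IT) →ₗ[(GWA k f)ᵐᵒᵖ] E')
      (π' : E' →ₗ[(GWA k f)ᵐᵒᵖ] (GWA k f ⧸ IS)),
      IsGradedExt k f IT t IS s 0 E' gE' ι' π' → ¬GradedSplits k f IS s E' gE' π' →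
      ∃ c : k, c ≠ 0 ∧ ∃ ψ : E →ₗ[(GWA k f)ᵐᵒᵖ] E',
        (∀ w : GWA k f ⧸ IT,
          ψ (ι w) = ι' ((MulOpposite.op (algebraMap k (GWA k f) c)) • w)) ∧
        (∀ e : E, π' (ψ e) = π e) ∧
        (∀ n, ψ '' gE n ⊆ gE' n))

section GradedAlgebra

variable {k f}

local notation "𝐱" => gwaX k f
local notation "𝐲" => gwaY k f
local notation "𝐳" => gwaZ k f

theorem gwaX_mul_gwaZ : 𝐱 * 𝐳 = (𝐳 + 1) * 𝐱 := by
  simpa [gwaX, gwaZ] using RingQuot.mkAlgHom_rel k (gwaRel.xz (k := k) (f := f))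

theorem gwaY_mul_gwaZ : 𝐲 * 𝐳 = (𝐳 - 1) * 𝐲 := by
  simpa [gwaY, gwaZ] using RingQuot.mkAlgHom_rel k (gwaRel.yz (k := k) (f := f))

theorem gwaX_mul_gwaY : 𝐱 * 𝐲 = aeval 𝐳 f := by
  have h := RingQuot.mkAlgHom_rel k (gwaRel.xy (k := k) (f := f))
  rwa [map_mul, ← aeval_algHom_apply] at h

theorem gwaY_mul_gwaX : 𝐲 * 𝐱 = aeval 𝐳 (f.comp (X - 1)) := by
  have h := RingQuot.mkAlgHom_rel k (gwaRel.yx (k := k) (f := f))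
  rwa [map_mul, ← aeval_algHom_apply] at h

theorem gwa_induction {P : GWA k f → Prop} (hC : ∀ c : k, P (algebraMap k _ c))
    (hX : P 𝐱) (hY : P 𝐲) (hZ : P 𝐳) (hmul : ∀ a b, P a → P b → P (a * b))
    (hadd : ∀ a b, P a → P b → P (a + b)) (a : GWA k f) : P a := by
  obtain ⟨a, rfl⟩ := RingQuot.mkAlgHom_surjective k (gwaRel k f) a
  induction a with
  | grade0 c => simpa using hC c
  | grade1 i => fin_cases i <;> assumption
  | mul a b ha hb => simpa using hmul _ _ ha hb
  | add a b ha hb => simpa using hadd _ _ ha hb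

theorem gwaMon_natCast (n : ℕ) : gwaMon k f n = 𝐱 ^ n := by
  simp [gwaMon]

theorem gwaMon_neg_natCast (n : ℕ) : gwaMon k f (-n) = 𝐲 ^ n := by
  rcases Nat.eq_zero_or_pos n with rfl | hn
  · simp [gwaMon]
  · rw [gwaMon, if_neg (by lia)]
    simp

theorem gwaMon_zero : gwaMon k f 0 = 1 := by
  simpa using gwaMon_natCast (k := k) (f := f) 0

theorem mul_aeval_of_semiconj {a : GWA k f} {r : k[X]} (h : a * 𝐳 = aeval 𝐳 r * a) (p : k[X]) :
    a * aeval 𝐳 p = aeval 𝐳 (p.comp r) * a := by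
  induction p using Polynomial.induction_on' with
  | add p q hp hq => simp [mul_add, add_mul, hp, hq]
  | monomial n c =>
    have hn : a * 𝐳 ^ n = aeval 𝐳 r ^ n * a := by
      have : SemiconjBy a 𝐳 (aeval 𝐳 r) := h
      exact this.pow_right n
    rw [aeval_monomial, monomial_comp, map_mul, aeval_C, map_pow, mul_assoc, ← hn,
      ← mul_assoc, ← Algebra.commutes, mul_assoc]

theorem gwaMon_mul_gwaZ (n : ℤ) : gwaMon k f n * 𝐳 = (𝐳 + n) * gwaMon k f n := by
  obtain ⟨n, rfl | rfl⟩ := n.eq_nat_or_neg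
  · rw [gwaMon_natCast]
    induction n with
    | zero => simp
    | succ n ih =>
      rw [pow_succ, mul_assoc, gwaX_mul_gwaZ, ← mul_assoc, mul_add, ih, ← mul_assoc]
      push_cast
      noncomm_ring
  · rw [gwaMon_neg_natCast]
    induction n with
    | zero => simp
    | succ n ih =>
      rw [pow_succ, mul_assoc, gwaY_mul_gwaZ, ← mul_assoc, mul_sub, ih, ← mul_assoc, mul_one,
        ← sub_one_mul]
      push_cast
      rw [neg_add, ← add_assoc, ← sub_eq_add_neg _ (1 : GWA k f)]

theorem mem_gwaComp {n : ℤ} {a : GWA k f} :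
    a ∈ gwaComp k f n ↔ ∃ p : k[X], a = aeval 𝐳 p * gwaMon k f n := by
  refine ⟨fun h => ?_, fun h => Submodule.subset_span h⟩
  induction h using Submodule.span_induction with
  | mem x hx => exact hx
  | zero => exact ⟨0, by simp⟩
  | add _ _ _ _ hx hy =>
    obtain ⟨p, rfl⟩ := hx
    obtain ⟨q, rfl⟩ := hy
    exact ⟨p + q, by simp [add_mul]⟩
  | smul c _ _ hx =>
    obtain ⟨p, rfl⟩ := hx
    exact ⟨c • p, by simp⟩

theorem aeval_mul_mem_gwaComp (p : k[X]) {n : ℤ} {a : GWA k f} (h : a ∈ gwaComp k f n) :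
    aeval 𝐳 p * a ∈ gwaComp k f n := by
  obtain ⟨q, rfl⟩ := mem_gwaComp.1 h
  exact mem_gwaComp.2 ⟨p * q, by rw [map_mul, mul_assoc]⟩

theorem gwaMon_mem_gwaComp (n : ℤ) : gwaMon k f n ∈ gwaComp k f n :=
  mem_gwaComp.2 ⟨1, by simp⟩

theorem mul_gwaZ_of_mem {n : ℤ} {a : GWA k f} (h : a ∈ gwaComp k f n) :
    a * 𝐳 = (𝐳 + n) * a := by
  obtain ⟨p, rfl⟩ := mem_gwaComp.1 h
  have hp : aeval 𝐳 p * (𝐳 + n) = (𝐳 + n) * aeval 𝐳 p := by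
    have : (𝐳 + n) = aeval 𝐳 (X + (n : k[X])) := by simp
    rw [this, ← map_mul, ← map_mul, mul_comm]
  rw [mul_assoc, gwaMon_mul_gwaZ, ← mul_assoc, hp, mul_assoc]

theorem mul_aeval_mem_gwaComp (p : k[X]) {n : ℤ} {a : GWA k f} (h : a ∈ gwaComp k f n) :
    a * aeval 𝐳 p ∈ gwaComp k f n := by
  rw [mul_aeval_of_semiconj (r := X + (n : k[X])) (by simpa using mul_gwaZ_of_mem h)]
  exact aeval_mul_mem_gwaComp _ h

theorem mul_gwaX_mem_gwaComp {n : ℤ} {a : GWA k f} (h : a ∈ gwaComp k f n) :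
    a * 𝐱 ∈ gwaComp k f (n + 1) := by
  obtain ⟨p, rfl⟩ := mem_gwaComp.1 h
  rw [mul_assoc]
  refine aeval_mul_mem_gwaComp p ?_
  obtain ⟨n, rfl | rfl⟩ := n.eq_nat_or_neg
  · rw [gwaMon_natCast, ← pow_succ, ← gwaMon_natCast, Nat.cast_succ]
    exact gwaMon_mem_gwaComp _
  · cases n with
    | zero => simpa [gwaMon] using gwaMon_mem_gwaComp (k := k) (f := f) 1
    | succ n =>
      rw [gwaMon_neg_natCast, pow_succ, mul_assoc, gwaY_mul_gwaX]
      have : (-((n + 1 : ℕ) : ℤ) + 1) = -n := by push_cast; ring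
      rw [this, ← gwaMon_neg_natCast]
      exact mul_aeval_mem_gwaComp _ (gwaMon_mem_gwaComp _)

theorem mul_gwaY_mem_gwaComp {n : ℤ} {a : GWA k f} (h : a ∈ gwaComp k f n) :
    a * 𝐲 ∈ gwaComp k f (n - 1) := by
  obtain ⟨p, rfl⟩ := mem_gwaComp.1 h
  rw [mul_assoc]
  refine aeval_mul_mem_gwaComp p ?_
  obtain ⟨n, rfl | rfl⟩ := n.eq_nat_or_neg
  · cases n with
    | zero => simpa [gwaMon] using gwaMon_mem_gwaComp (k := k) (f := f) (-1)
    | succ n =>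
      rw [gwaMon_natCast, pow_succ, mul_assoc, gwaX_mul_gwaY]
      have : (((n + 1 : ℕ) : ℤ) - 1) = n := by push_cast; ring
      rw [this, ← gwaMon_natCast]
      exact mul_aeval_mem_gwaComp _ (gwaMon_mem_gwaComp _)
  · have : (-(n : ℤ) - 1) = -((n + 1 : ℕ) : ℤ) := by push_cast; ring
    rw [gwaMon_neg_natCast, ← pow_succ, ← gwaMon_neg_natCast, this]
    exact gwaMon_mem_gwaComp _

theorem mul_mem_gwaComp {i j : ℤ} {a b : GWA k f} (ha : a ∈ gwaComp k f i)
    (hb : b ∈ gwaComp k f j) : a * b ∈ gwaComp k f (i + j) := by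
  obtain ⟨p, rfl⟩ := mem_gwaComp.1 hb
  rw [← mul_assoc]
  replace ha := mul_aeval_mem_gwaComp p ha
  generalize a * aeval 𝐳 p = c at ha
  clear hb
  obtain ⟨n, rfl | rfl⟩ := j.eq_nat_or_neg
  · rw [gwaMon_natCast]
    induction n with
    | zero => simpa using ha
    | succ n ih =>
      rw [pow_succ, ← mul_assoc, Nat.cast_succ, ← add_assoc]
      exact mul_gwaX_mem_gwaComp ih
  · rw [gwaMon_neg_natCast]
    induction n with
    | zero => simpa using ha
    | succ n ih =>
      rw [pow_succ, ← mul_assoc, Nat.cast_succ, neg_add, ← sub_eq_add_neg, ← add_sub_assoc]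
      exact mul_gwaY_mem_gwaComp ih

theorem aeval_mem_gwaComp (p : k[X]) : aeval 𝐳 p ∈ gwaComp k f 0 :=
  mem_gwaComp.2 ⟨p, by simp [gwaMon_zero]⟩

theorem gwaZ_mem_gwaComp : 𝐳 ∈ gwaComp k f 0 := by
  simpa using aeval_mem_gwaComp (k := k) (f := f) X

theorem algebraMap_mem_gwaComp (c : k) : algebraMap k (GWA k f) c ∈ gwaComp k f 0 := by
  simpa using aeval_mem_gwaComp (k := k) (f := f) (C c)

theorem gwaX_pow_mem_gwaComp (n : ℕ) : 𝐱 ^ n ∈ gwaComp k f n :=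
  gwaMon_natCast (k := k) (f := f) n ▸ gwaMon_mem_gwaComp _

theorem gwaY_pow_mem_gwaComp (n : ℕ) : 𝐲 ^ n ∈ gwaComp k f (-n) :=
  gwaMon_neg_natCast (k := k) (f := f) n ▸ gwaMon_mem_gwaComp _

theorem gwaX_mem_gwaComp : 𝐱 ∈ gwaComp k f 1 := by
  simpa using gwaX_pow_mem_gwaComp (k := k) (f := f) 1

theorem gwaY_mem_gwaComp : 𝐲 ∈ gwaComp k f (-1) := by
  simpa using gwaY_pow_mem_gwaComp (k := k) (f := f) 1

theorem gwaZ_sub_mem_gwaComp (s : ℤ) : 𝐳 - s ∈ gwaComp k f 0 := by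
  have h := aeval_mem_gwaComp (k := k) (f := f) (X - (s : k[X]))
  rwa [map_sub, aeval_X, map_intCast] at h

/-- A homogeneous element is a multiple of the canonical monomial modulo `(z - s)A`. -/
theorem exists_eq_add_of_mem_gwaComp (s : ℤ) {n : ℤ} {a : GWA k f} (h : a ∈ gwaComp k f n) :
    ∃ (c : k) (b : GWA k f), a = algebraMap k _ c * gwaMon k f n + (𝐳 - s) * b := by
  obtain ⟨p, rfl⟩ := mem_gwaComp.1 h
  obtain ⟨q, hq⟩ := X_sub_C_dvd_sub_C_eval (a := (s : k)) (p := p)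
  refine ⟨p.eval (s : k), aeval 𝐳 q * gwaMon k f n, ?_⟩
  conv_lhs => rw [eq_add_of_sub_eq' hq]
  simp [add_mul, mul_assoc]

variable (k f) in
/-- The coaction of the group algebra of `ℤ` that encodes the grading. -/
def gwaCoaction : GWA k f →ₐ[k] AddMonoidAlgebra (GWA k f) ℤ :=
  RingQuot.liftAlgHom k ⟨FreeAlgebra.lift k ![.single 1 𝐱, .single (-1) 𝐲, .single 0 𝐳], by
    have hz (p : k[X]) : aeval (AddMonoidAlgebra.single (0 : ℤ) 𝐳) p =
        AddMonoidAlgebra.single 0 (aeval 𝐳 p) :=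
      aeval_algHom_apply (AddMonoidAlgebra.singleZeroAlgHom (R := k)) 𝐳 p
    rintro _ _ (_ | _ | _ | _)
    · simp only [map_mul, map_add, map_one, FreeAlgebra.lift_ι_apply, Matrix.cons_val,
        AddMonoidAlgebra.one_def, ← AddMonoidAlgebra.single_add,
        AddMonoidAlgebra.single_mul_single, gwaX_mul_gwaZ, add_zero, zero_add]
    · simp only [map_mul, map_sub, map_one, FreeAlgebra.lift_ι_apply, Matrix.cons_val,
        AddMonoidAlgebra.one_def, ← AddMonoidAlgebra.single_sub,
        AddMonoidAlgebra.single_mul_single, gwaY_mul_gwaZ, add_zero, zero_add]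
    · rw [map_mul, ← aeval_algHom_apply]
      simp only [FreeAlgebra.lift_ι_apply, Matrix.cons_val, hz,
        AddMonoidAlgebra.single_mul_single, gwaX_mul_gwaY, add_neg_cancel]
    · rw [map_mul, ← aeval_algHom_apply]
      simp only [FreeAlgebra.lift_ι_apply, Matrix.cons_val, hz,
        AddMonoidAlgebra.single_mul_single, gwaY_mul_gwaX, neg_add_cancel]⟩

theorem gwaCoaction_gwaX : gwaCoaction k f 𝐱 = .single 1 𝐱 :=
  (RingQuot.liftAlgHom_mkAlgHom_apply ..).trans (FreeAlgebra.lift_ι_apply ..)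

theorem gwaCoaction_gwaY : gwaCoaction k f 𝐲 = .single (-1) 𝐲 :=
  (RingQuot.liftAlgHom_mkAlgHom_apply ..).trans (FreeAlgebra.lift_ι_apply ..)

theorem gwaCoaction_gwaZ : gwaCoaction k f 𝐳 = .single 0 𝐳 :=
  (RingQuot.liftAlgHom_mkAlgHom_apply ..).trans (FreeAlgebra.lift_ι_apply ..)

theorem gwaCoaction_of_mem {n : ℤ} {a : GWA k f} (h : a ∈ gwaComp k f n) :
    gwaCoaction k f a = .single n a := by
  obtain ⟨p, rfl⟩ := mem_gwaComp.1 h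
  have hp : gwaCoaction k f (aeval 𝐳 p) = AddMonoidAlgebra.single 0 (aeval 𝐳 p) := by
    rw [← aeval_algHom_apply, gwaCoaction_gwaZ]
    exact aeval_algHom_apply (AddMonoidAlgebra.singleZeroAlgHom (R := k)) 𝐳 p
  have hm : gwaCoaction k f (gwaMon k f n) = AddMonoidAlgebra.single n (gwaMon k f n) := by
    obtain ⟨n, rfl | rfl⟩ := n.eq_nat_or_neg
    · rw [gwaMon_natCast, map_pow, gwaCoaction_gwaX, AddMonoidAlgebra.single_pow, nsmul_one]
    · rw [gwaMon_neg_natCast, map_pow, gwaCoaction_gwaY, AddMonoidAlgebra.single_pow,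
        nsmul_eq_mul, mul_neg_one]
  rw [map_mul, hp, hm, AddMonoidAlgebra.single_mul_single, zero_add]

/-- The projection of `A(f)` onto its homogeneous component of degree `n`. -/
def gwaProj (n : ℤ) : GWA k f →+ GWA k f :=
  (Finsupp.applyAddHom n).comp
    (AddMonoidAlgebra.coeffAddEquiv.toAddMonoidHom.comp (gwaCoaction k f : GWA k f →+ _))

theorem gwaProj_apply (n : ℤ) (a : GWA k f) : gwaProj n a = (gwaCoaction k f a).coeff n := rfl

theorem gwaProj_of_mem {n : ℤ} {a : GWA k f} (h : a ∈ gwaComp k f n) (m : ℤ) :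
    gwaProj m a = if m = n then a else 0 := by
  rw [gwaProj_apply, gwaCoaction_of_mem h]
  simp only [AddMonoidAlgebra.coeff_single, Finsupp.single_apply, eq_comm]

theorem gwaProj_mul_of_mem {i : ℤ} {a : GWA k f} (h : a ∈ gwaComp k f i) (n : ℤ) (b : GWA k f) :
    gwaProj n (a * b) = a * gwaProj (n - i) b := by
  rw [gwaProj_apply, map_mul, gwaCoaction_of_mem h, AddMonoidAlgebra.coeff_single_mul_apply,
    gwaProj_apply, neg_add_eq_sub]

theorem mem_iSup_gwaComp (a : GWA k f) : a ∈ ⨆ n, gwaComp k f n := by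
  have hle (n : ℤ) {b : GWA k f} (hb : b ∈ gwaComp k f n) : b ∈ ⨆ n, gwaComp k f n :=
    Submodule.mem_iSup_of_mem n hb
  induction a using gwa_induction with
  | hC c => exact hle 0 (algebraMap_mem_gwaComp c)
  | hX => exact hle 1 gwaX_mem_gwaComp
  | hY => exact hle (-1) gwaY_mem_gwaComp
  | hZ => exact hle 0 gwaZ_mem_gwaComp
  | hadd a b ha hb => exact add_mem ha hb
  | hmul a b ha hb =>
    induction ha using Submodule.iSup_induction' with
    | zero => simp
    | add _ _ _ _ h h' => rw [add_mul]; exact add_mem h h'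
    | mem i a ha =>
      induction hb using Submodule.iSup_induction' with
      | zero => simp
      | add _ _ _ _ h h' => rw [mul_add]; exact add_mem h h'
      | mem j b hb => exact hle _ (mul_mem_gwaComp ha hb)

theorem gwaComp_induction {P : GWA k f → Prop} (hmem : ∀ n, ∀ a ∈ gwaComp k f n, P a)
    (hadd : ∀ a b, P a → P b → P (a + b)) (a : GWA k f) : P a := by
  have ha := mem_iSup_gwaComp a
  induction ha using Submodule.iSup_induction' with
  | mem i a ha => exact hmem i a ha
  | zero => exact hmem 0 0 (zero_mem _)
  | add a b _ _ ha hb => exact hadd a b ha hb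

theorem gwaProj_mem (n : ℤ) (a : GWA k f) : gwaProj n a ∈ gwaComp k f n := by
  induction a using gwaComp_induction with
  | hmem m a ha =>
    rw [gwaProj_of_mem ha]
    split_ifs with h
    · exact h ▸ ha
    · exact zero_mem _
  | hadd a b ha hb => rw [map_add]; exact add_mem ha hb

theorem exists_sum_gwaProj (a : GWA k f) : ∃ s : Finset ℤ, a = ∑ n ∈ s, gwaProj n a := by
  suffices h : ∃ s : Finset ℤ, ∀ t, s ⊆ t → a = ∑ n ∈ t, gwaProj n a from
    h.imp fun s hs => hs s subset_rfl
  induction a using gwaComp_induction with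
  | hmem m a ha =>
    refine ⟨{m}, fun t ht => ?_⟩
    simp_rw [gwaProj_of_mem ha]
    simp [Finset.singleton_subset_iff.1 ht]
  | hadd a b ha hb =>
    obtain ⟨s, hs⟩ := ha
    obtain ⟨t, ht⟩ := hb
    refine ⟨s ∪ t, fun r hr => ?_⟩
    simp_rw [map_add, Finset.sum_add_distrib]
    rw [← hs r (Finset.union_subset_left hr), ← ht r (Finset.union_subset_right hr)]

/-- A right ideal of `A(f)` is graded if it contains the homogeneous components of its elements. -/
def IsGradedRightIdeal (I : Submodule (GWA k f)ᵐᵒᵖ (GWA k f)) : Prop :=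
  ∀ a ∈ I, ∀ n, gwaProj n a ∈ I

theorem mul_mem_of_mem {I : Submodule (GWA k f)ᵐᵒᵖ (GWA k f)} {a : GWA k f} (h : a ∈ I)
    (b : GWA k f) : a * b ∈ I :=
  I.smul_mem (MulOpposite.op b) h

theorem isGradedRightIdeal_span {G : Set (GWA k f)} (hG : ∀ g ∈ G, ∃ i, g ∈ gwaComp k f i) :
    IsGradedRightIdeal (Submodule.span (GWA k f)ᵐᵒᵖ G) := by
  intro a ha n
  induction ha using Submodule.closure_induction with
  | zero => simp
  | add a b _ _ ha hb => rw [map_add]; exact add_mem ha hb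
  | smul_mem r g hg =>
    obtain ⟨i, hi⟩ := hG g hg
    rw [show r • g = g * r.unop from rfl, gwaProj_mul_of_mem hi]
    exact mul_mem_of_mem (Submodule.subset_span hg) _

theorem gwaComp_subset_of_gwaMon_mem {I : Submodule (GWA k f)ᵐᵒᵖ (GWA k f)} {s : ℤ}
    (hI : 𝐳 - s ∈ I) {n : ℤ} (hn : gwaMon k f n ∈ I) {a : GWA k f} (ha : a ∈ gwaComp k f n) :
    a ∈ I := by
  obtain ⟨c, b, rfl⟩ := exists_eq_add_of_mem_gwaComp s ha
  rw [Algebra.commutes]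
  exact add_mem (mul_mem_of_mem hn _) (mul_mem_of_mem hI _)

end GradedAlgebra

section GradedExtensions

open scoped RightActions
open MulOpposite (op)

variable {k f}

local notation "𝐳" => gwaZ k f

theorem smul_op_mul {M : Type*} [AddCommGroup M] [Module (GWA k f)ᵐᵒᵖ M] (e : M)
    (a b : GWA k f) : e <• (a * b) = e <• a <• b := by
  rw [MulOpposite.op_mul, mul_smul]

theorem smul_op_add {M : Type*} [AddCommGroup M] [Module (GWA k f)ᵐᵒᵖ M] (e : M)
    (a b : GWA k f) : e <• (a + b) = e <• a + e <• b := by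
  rw [MulOpposite.op_add, add_smul]

/-- The homomorphism of right modules `A(f) → M` determined by `1 ↦ e`. -/
def smulOpHom {M : Type*} [AddCommGroup M] [Module (GWA k f)ᵐᵒᵖ M] (e : M) :
    GWA k f →ₗ[(GWA k f)ᵐᵒᵖ] M where
  toFun a := e <• a
  map_add' := smul_op_add e
  map_smul' r a := smul_op_mul e a r.unop

theorem mk_smul_op {I : Submodule (GWA k f)ᵐᵒᵖ (GWA k f)} (a b : GWA k f) :
    (Submodule.Quotient.mk a : GWA k f ⧸ I) <• b = Submodule.Quotient.mk (a * b) := rfl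

theorem mk_one_smul_op {I : Submodule (GWA k f)ᵐᵒᵖ (GWA k f)} (a : GWA k f) :
    (Submodule.Quotient.mk 1 : GWA k f ⧸ I) <• a = Submodule.Quotient.mk a := by
  rw [mk_smul_op, one_mul]

/-- The canonical generator of `A(f)/I` has degree `s` in `(A(f)/I)⟨s⟩`. -/
theorem mk_one_mem_qgrade (I : Submodule (GWA k f)ᵐᵒᵖ (GWA k f)) (s : ℤ) :
    Submodule.Quotient.mk 1 ∈ qgrade k f I s s :=
  ⟨1, by simpa using algebraMap_mem_gwaComp (k := k) (f := f) 1, rfl⟩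

theorem smul_op_mem_qgrade {I : Submodule (GWA k f)ᵐᵒᵖ (GWA k f)} {s n i : ℤ} {w : GWA k f ⧸ I}
    (hw : w ∈ qgrade k f I s n) {a : GWA k f} (ha : a ∈ gwaComp k f i) :
    w <• a ∈ qgrade k f I s (n + i) := by
  obtain ⟨b, hb, rfl⟩ := hw
  exact ⟨b * a, by simpa [add_sub_right_comm] using mul_mem_gwaComp hb ha, rfl⟩

/-- In the shifted module `(A/I)⟨s⟩`, the element `z` acts on the component of degree `n`
as multiplication by `n`. -/
theorem smul_op_gwaZ_of_mem_qgrade {I : Submodule (GWA k f)ᵐᵒᵖ (GWA k f)} {s n : ℤ}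
    (hI : 𝐳 - s ∈ I) {w : GWA k f ⧸ I} (hw : w ∈ qgrade k f I s n) :
    w <• (𝐳 - n) = 0 := by
  obtain ⟨a, ha, rfl⟩ := hw
  rw [mk_smul_op, Submodule.Quotient.mk_eq_zero, mul_sub, mul_gwaZ_of_mem ha,
    ← Int.cast_comm, ← sub_mul, add_sub_assoc, ← Int.cast_sub, sub_sub_cancel_left,
    Int.cast_neg, ← sub_eq_add_neg]
  exact mul_mem_of_mem hI a

theorem eq_zero_of_mem_qgrade {I : Submodule (GWA k f)ᵐᵒᵖ (GWA k f)} {s n : ℤ}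
    (hI : 𝐳 - s ∈ I) (hn : gwaMon k f (n - s) ∈ I) {w : GWA k f ⧸ I}
    (hw : w ∈ qgrade k f I s n) : w = 0 := by
  obtain ⟨a, ha, rfl⟩ := hw
  exact (Submodule.Quotient.mk_eq_zero _).2 (gwaComp_subset_of_gwaMon_mem hI hn ha)

theorem exists_smul_of_mem_qgrade {I : Submodule (GWA k f)ᵐᵒᵖ (GWA k f)} {s n : ℤ}
    (hI : 𝐳 - s ∈ I) {w : GWA k f ⧸ I} (hw : w ∈ qgrade k f I s n) :
    ∃ c : k, w = Submodule.Quotient.mk (gwaMon k f (n - s)) <• algebraMap k (GWA k f) c := by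
  obtain ⟨a, ha, rfl⟩ := hw
  obtain ⟨c, b, rfl⟩ := exists_eq_add_of_mem_gwaComp s ha
  refine ⟨c, ?_⟩
  rw [mk_smul_op, Submodule.Quotient.eq, Algebra.commutes, add_sub_cancel_left]
  exact mul_mem_of_mem hI b

theorem eq_zero_of_smul_op_algebraMap {M : Type*} [AddCommGroup M] [Module (GWA k f)ᵐᵒᵖ M]
    {e : M} {c : k} (hc : c ≠ 0) (h : e <• algebraMap k (GWA k f) c = 0) : e = 0 := by
  have : e <• (algebraMap k (GWA k f) c * algebraMap k (GWA k f) c⁻¹) = 0 := by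
    rw [smul_op_mul, h, smul_zero]
  rwa [← map_mul, mul_inv_cancel₀ hc, map_one, MulOpposite.op_one, one_smul] at this

theorem isGrading_qgrade {I : Submodule (GWA k f)ᵐᵒᵖ (GWA k f)} (hI : IsGradedRightIdeal I)
    (s : ℤ) : IsGrading k f (ModuleCat.of (GWA k f)ᵐᵒᵖ (GWA k f ⧸ I)) (qgrade k f I s) := by
  refine ⟨fun n => ⟨0, zero_mem _, rfl⟩, ?_, ?_, ?_, ?_, ?_⟩
  · rintro n _ ⟨a, ha, rfl⟩ _ ⟨b, hb, rfl⟩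
    exact ⟨a + b, add_mem ha hb, rfl⟩
  · rintro n _ ⟨a, ha, rfl⟩
    exact ⟨-a, neg_mem ha, rfl⟩
  · intro e
    obtain ⟨a, rfl⟩ := Submodule.Quotient.mk_surjective I e
    obtain ⟨t, ht⟩ := exists_sum_gwaProj a
    refine ⟨t.map (addRightEmbedding s), fun n => Submodule.Quotient.mk (gwaProj (n - s) a),
      fun n => ⟨_, gwaProj_mem _ _, rfl⟩, ?_⟩
    simp only [Finset.sum_map, addRightEmbedding_apply, add_sub_cancel_right]
    conv_lhs => rw [ht]
    exact map_sum I.mkQ _ _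
  · intro t c hc h n hn
    choose! a ha hac using hc
    have hsum : ∑ m ∈ t, a m ∈ I := by
      rw [← Submodule.Quotient.mk_eq_zero, ← Submodule.mkQ_apply, map_sum, ← h]
      exact Finset.sum_congr rfl fun m hm => hac m hm
    have hp := hI _ hsum (n - s)
    rw [map_sum, Finset.sum_congr rfl fun m hm => gwaProj_of_mem (ha m hm) (n - s)] at hp
    simp only [sub_left_inj, Finset.sum_ite_eq, if_pos hn] at hp
    rw [← hac n hn]
    exact (Submodule.Quotient.mk_eq_zero I).2 hp
  · intro n i e he a ha
    exact smul_op_mem_qgrade he ha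

namespace IsGrading

variable {E : ModuleCat.{0} (GWA k f)ᵐᵒᵖ} {gE : ℤ → Set E}

theorem zero_mem (h : IsGrading k f E gE) (n : ℤ) : 0 ∈ gE n := h.1 n

theorem add_mem (h : IsGrading k f E gE) {n : ℤ} {a b : E} (ha : a ∈ gE n) (hb : b ∈ gE n) :
    a + b ∈ gE n := h.2.1 n a ha b hb

theorem neg_mem (h : IsGrading k f E gE) {n : ℤ} {a : E} (ha : a ∈ gE n) : -a ∈ gE n :=
  h.2.2.1 n a ha

theorem sub_mem (h : IsGrading k f E gE) {n : ℤ} {a b : E} (ha : a ∈ gE n) (hb : b ∈ gE n) :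
    a - b ∈ gE n := by
  rw [sub_eq_add_neg]
  exact h.add_mem ha (h.neg_mem hb)

theorem smul_mem (h : IsGrading k f E gE) {n i m : ℤ} {e : E} (he : e ∈ gE n) {a : GWA k f}
    (ha : a ∈ gwaComp k f i) (hm : n + i = m) : e <• a ∈ gE m :=
  hm ▸ h.2.2.2.2.2 n i e he a ha

/-- Homogeneous components are unique. -/
theorem eq_of_sum_eq (h : IsGrading k f E gE) {s : Finset ℤ} {c : ℤ → E}
    (hc : ∀ n, c n ∈ gE n) {m : ℤ} {e : E} (he : e ∈ gE m) (hs : ∑ n ∈ s, c n = e) :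
    e = if m ∈ s then c m else 0 := by
  let c' : ℤ → E := fun n => (if n ∈ s then c n else 0) - if n = m then e else 0
  have hc' (n : ℤ) : c' n ∈ gE n := by
    refine h.sub_mem ?_ ?_
    · split_ifs
      exacts [hc n, h.zero_mem n]
    · split_ifs with hn
      exacts [hn ▸ he, h.zero_mem n]
  have hsum : ∑ n ∈ insert m s, c' n = 0 := by
    rw [Finset.sum_sub_distrib, Finset.sum_ite_mem,
      Finset.inter_eq_right.2 (Finset.subset_insert m s), hs]
    simp
  have := h.2.2.2.2.1 (insert m s) c' (fun n _ => hc' n) hsum m (Finset.mem_insert_self m s)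
  simp only [c', if_true] at this
  exact (sub_eq_zero.1 this).symm

end IsGrading

namespace IsGradedExt

variable {IT IS : Submodule (GWA k f)ᵐᵒᵖ (GWA k f)} {t s d : ℤ}
  {E : ModuleCat.{0} (GWA k f)ᵐᵒᵖ} {gE : ℤ → Set E}
  {ι : (GWA k f ⧸ IT) →ₗ[(GWA k f)ᵐᵒᵖ] E} {π : E →ₗ[(GWA k f)ᵐᵒᵖ] (GWA k f ⧸ IS)}

/-- The canonical generator of `(A/I_S)⟨s⟩` lifts to a homogeneous element of degree `s`. -/
theorem exists_lift (h : IsGradedExt k f IT t IS s d E gE ι π) (hIS : IsGradedRightIdeal IS) :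
    ∃ u ∈ gE s, π u = Submodule.Quotient.mk 1 := by
  obtain ⟨hgr, -, hsurj, -, -, hπ⟩ := h
  obtain ⟨e, he⟩ := hsurj (Submodule.Quotient.mk 1)
  obtain ⟨S, c, hc, rfl⟩ := hgr.2.2.2.1 e
  rw [map_sum] at he
  have := (isGrading_qgrade hIS s).eq_of_sum_eq (c := fun n => π (c n))
    (fun n => hπ n ⟨c n, hc n, rfl⟩) (mk_one_mem_qgrade IS s) he
  split_ifs at this with hs
  · exact ⟨c s, hc s, this.symm⟩
  · exact ⟨0, hgr.zero_mem s, by rw [map_zero]; exact this.symm⟩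

/-- The kernel of `π` in degree `n` comes from the component of degree `n - d` of `A/I_T`. -/
theorem exists_of_map_eq_zero (h : IsGradedExt k f IT t IS s d E gE ι π) {n : ℤ} {e : E}
    (he : e ∈ gE n) (hπ : π e = 0) : ∃ w ∈ qgrade k f IT t (n - d), ι w = e := by
  obtain ⟨hgr, -, -, hker, hι, -⟩ := h
  obtain ⟨w, rfl⟩ : e ∈ LinearMap.range ι := hker ▸ hπ
  obtain ⟨a, rfl⟩ := Submodule.Quotient.mk_surjective IT w
  obtain ⟨S, hS⟩ := exists_sum_gwaProj a
  let c : ℤ → GWA k f ⧸ IT := fun m => Submodule.Quotient.mk (gwaProj (m - d - t) a)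
  have hc (m : ℤ) : c m ∈ qgrade k f IT t (m - d) := ⟨_, gwaProj_mem _ _, rfl⟩
  have hsum : ∑ m ∈ S.map (addRightEmbedding (d + t)), ι (c m) = ι (Submodule.Quotient.mk a) := by
    rw [← map_sum]
    congr 1
    conv_rhs => rw [hS]
    rw [← Submodule.mkQ_apply, map_sum, Finset.sum_map]
    refine Finset.sum_congr rfl fun m _ => ?_
    simp only [c, addRightEmbedding_apply, Submodule.mkQ_apply]
    rw [show m + (d + t) - d - t = m by ring]
  have := hgr.eq_of_sum_eq (fun m => hι m ⟨c m, hc m, rfl⟩) he hsum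
  split_ifs at this with hs
  · exact ⟨c n, hc n, this.symm⟩
  · exact ⟨0, ⟨0, Submodule.zero_mem _, rfl⟩, by rw [this, map_zero]⟩

variable {u : E}

theorem exists_smul_op_eq (h : IsGradedExt k f IT t IS s d E gE ι π) (hu : u ∈ gE s)
    (hπu : π u = Submodule.Quotient.mk 1) {i : ℤ} {g : GWA k f} (hg : g ∈ gwaComp k f i)
    (hgS : g ∈ IS) : ∃ w ∈ qgrade k f IT t (s + i - d), ι w = u <• g := by
  refine h.exists_of_map_eq_zero (h.1.smul_mem hu hg rfl) ?_
  rw [map_smul, hπu, mk_one_smul_op, Submodule.Quotient.mk_eq_zero]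
  exact hgS

theorem smul_op_eq_zero (h : IsGradedExt k f IT t IS s d E gE ι π) (hu : u ∈ gE s)
    (hπu : π u = Submodule.Quotient.mk 1) (hzT : 𝐳 - t ∈ IT) {i : ℤ} {g : GWA k f}
    (hg : g ∈ gwaComp k f i) (hgS : g ∈ IS) (hm : gwaMon k f (s + i - d - t) ∈ IT) :
    u <• g = 0 := by
  obtain ⟨w, hw, hwu⟩ := h.exists_smul_op_eq hu hπu hg hgS
  rw [← hwu, eq_zero_of_mem_qgrade hzT hm hw, map_zero]

/-- A graded extension splits when the generator lifts to a homogeneous element that is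
annihilated by generators of `I_S`. -/
theorem gradedSplits_of_lift (h : IsGradedExt k f IT t IS s d E gE ι π) {G : Set (GWA k f)}
    (hG : IS = Submodule.span (GWA k f)ᵐᵒᵖ G) (hu : u ∈ gE s)
    (hπu : π u = Submodule.Quotient.mk 1) (hann : ∀ g ∈ G, u <• g = 0) :
    GradedSplits k f IS s E gE π := by
  have hφ : IS ≤ LinearMap.ker (smulOpHom u) := by
    rw [hG, Submodule.span_le]
    exact hann
  refine ⟨IS.liftQ (smulOpHom u) hφ, ?_, ?_⟩
  · refine LinearMap.ext fun w => ?_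
    obtain ⟨a, rfl⟩ := Submodule.Quotient.mk_surjective IS w
    change π (u <• a) = _
    rw [map_smul, hπu, mk_one_smul_op, LinearMap.id_apply]
  · rintro n _ ⟨_, ⟨a, ha, rfl⟩, rfl⟩
    exact h.1.smul_mem hu ha (by ring)

theorem gradedSplits_of_degree_ne_zero [CharZero k] (h : IsGradedExt k f IT t IS s d E gE ι π)
    (hd : d ≠ 0) {G : Set (GWA k f)} (hG : IS = Submodule.span (GWA k f)ᵐᵒᵖ G)
    (hGhom : ∀ g ∈ G, ∃ i, g ∈ gwaComp k f i) (hzS : 𝐳 - s ∈ IS) (hzT : 𝐳 - t ∈ IT) :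
    GradedSplits k f IS s E gE π := by
  obtain ⟨u, hu, hπu⟩ := h.exists_lift (hG ▸ isGradedRightIdeal_span hGhom)
  have hdk : (d : k) ≠ 0 := by exact_mod_cast hd
  obtain ⟨w, hw, hwu⟩ := h.exists_smul_op_eq hu hπu (gwaZ_sub_mem_gwaComp s) hzS
  replace hw := smul_op_gwaZ_of_mem_qgrade hzT hw
  set a : GWA k f := 1 + (𝐳 - s) * algebraMap k _ (d : k)⁻¹ with ha
  have ha0 : a ∈ gwaComp k f 0 := by
    refine add_mem (by simpa using algebraMap_mem_gwaComp (k := k) (f := f) 1) ?_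
    simpa using mul_mem_gwaComp (gwaZ_sub_mem_gwaComp s) (algebraMap_mem_gwaComp _)
  have hπv : π (u <• a) = Submodule.Quotient.mk 1 := by
    rw [map_smul, hπu, mk_one_smul_op, Submodule.Quotient.eq, ha, add_sub_cancel_left]
    exact mul_mem_of_mem hzS _
  have hvz : u <• a <• (𝐳 - s) = 0 := by
    have key : a * (𝐳 - s) =
        (𝐳 - s) * ((𝐳 - ((s + 0 - d : ℤ) : GWA k f)) * algebraMap k _ (d : k)⁻¹) := by
      have hinv : (d : GWA k f) * algebraMap k _ (d : k)⁻¹ = 1 := by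
        rw [← map_intCast (algebraMap k (GWA k f)), ← map_mul, mul_inv_cancel₀ hdk, map_one]
      have : 𝐳 - ((s + 0 - d : ℤ) : GWA k f) = (𝐳 - s) + d := by push_cast; abel
      rw [this, add_mul (𝐳 - (s : GWA k f)), hinv, ha, add_mul, one_mul, mul_add, mul_one,
        mul_assoc, add_comm, Algebra.commutes]
    rw [← smul_op_mul, key, smul_op_mul, ← hwu, smul_op_mul, ← map_smul, hw, map_zero, smul_zero]
  have hv := h.1.smul_mem hu ha0 (add_zero s)
  generalize u <• a = v at hv hvz hπv
  refine h.gradedSplits_of_lift hG hv hπv fun g hg => ?_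
  obtain ⟨i, hi⟩ := hGhom g hg
  obtain ⟨w', hw', hwv⟩ := h.exists_smul_op_eq hv hπv hi (hG ▸ Submodule.subset_span hg)
  have hzero : v <• g <• (𝐳 - ((s + i - d : ℤ) : GWA k f)) = 0 := by
    rw [← hwv, ← map_smul, smul_op_gwaZ_of_mem_qgrade hzT hw', map_zero]
  refine eq_zero_of_smul_op_algebraMap (f := f) hdk ?_
  have key : g * algebraMap k _ (d : k) =
      g * (𝐳 - ((s + i - d : ℤ) : GWA k f)) + -((𝐳 - s) * g) := by
    rw [map_intCast, mul_sub, mul_gwaZ_of_mem hi, add_mul, sub_mul, Int.cast_comm,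
      Int.cast_comm s g]
    push_cast
    rw [mul_sub, mul_add]
    abel
  rw [← smul_op_mul, key, smul_op_add, smul_op_mul, hzero, MulOpposite.op_neg, neg_smul,
    smul_op_mul, hvz, smul_zero, zero_add, neg_zero]

end IsGradedExt

end GradedExtensions

section DegreeZeroExtensions

open scoped RightActions
open MulOpposite (op)

variable {k f}

local notation "𝐳" => gwaZ k f

namespace IsGradedExt

variable {IT IS : Submodule (GWA k f)ᵐᵒᵖ (GWA k f)} {t s : ℤ} {G : Set (GWA k f)}
  {E : ModuleCat.{0} (GWA k f)ᵐᵒᵖ} {gE : ℤ → Set E}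

theorem map_map_eq_zero {d : ℤ} {ι : (GWA k f ⧸ IT) →ₗ[(GWA k f)ᵐᵒᵖ] E}
    {π : E →ₗ[(GWA k f)ᵐᵒᵖ] (GWA k f ⧸ IS)} (h : IsGradedExt k f IT t IS s d E gE ι π)
    (w : GWA k f ⧸ IT) : π (ι w) = 0 := by
  have hw : ι w ∈ LinearMap.ker π := h.2.2.2.1 ▸ LinearMap.mem_range_self ι w
  exact hw

theorem gradedSplits_of_gwaMon_mem {ι : (GWA k f ⧸ IT) →ₗ[(GWA k f)ᵐᵒᵖ] E}
    {π : E →ₗ[(GWA k f)ᵐᵒᵖ] (GWA k f ⧸ IS)} (h : IsGradedExt k f IT t IS s 0 E gE ι π)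
    (hG : IS = Submodule.span (GWA k f)ᵐᵒᵖ G)
    (hGm : ∀ g ∈ G, ∃ i, g ∈ gwaComp k f i ∧ gwaMon k f (s + i - t) ∈ IT) (hzT : 𝐳 - t ∈ IT) :
    GradedSplits k f IS s E gE π := by
  obtain ⟨u, hu, hπu⟩ := h.exists_lift
    (hG ▸ isGradedRightIdeal_span fun g hg => (hGm g hg).imp fun _ => And.left)
  refine h.gradedSplits_of_lift hG hu hπu fun g hg => ?_
  obtain ⟨i, hi, him⟩ := hGm g hg
  exact h.smul_op_eq_zero hu hπu hzT hi (hG ▸ Submodule.subset_span hg) (by simpa using him)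

/-- A degree-zero self-extension splits if some homogeneous `g₀ ∈ I` satisfies
`g₀ r = (z - s)(z - s + β)` with `β ≠ 0`, and the degree of `g₀` does not occur in `A/I`. -/
theorem gradedSplits_self {ι : (GWA k f ⧸ IS) →ₗ[(GWA k f)ᵐᵒᵖ] E}
    {π : E →ₗ[(GWA k f)ᵐᵒᵖ] (GWA k f ⧸ IS)} (h : IsGradedExt k f IS s IS s 0 E gE ι π)
    (hG : IS = Submodule.span (GWA k f)ᵐᵒᵖ G)
    (hGm : ∀ g ∈ G, g = 𝐳 - s ∨ ∃ i, g ∈ gwaComp k f i ∧ gwaMon k f i ∈ IS) (hzS : 𝐳 - s ∈ IS)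
    {i₀ : ℤ} {g₀ r : GWA k f} {β : k} (hg₀ : g₀ ∈ gwaComp k f i₀) (hg₀S : g₀ ∈ IS)
    (hm₀ : gwaMon k f i₀ ∈ IS) (hr : g₀ * r = (𝐳 - s) * (𝐳 - s + algebraMap k _ β))
    (hβ : β ≠ 0) : GradedSplits k f IS s E gE π := by
  have hGhom : ∀ g ∈ G, ∃ i, g ∈ gwaComp k f i := fun g hg => by
    rcases hGm g hg with rfl | ⟨i, hi, -⟩
    exacts [⟨0, gwaZ_sub_mem_gwaComp s⟩, ⟨i, hi⟩]
  obtain ⟨u, hu, hπu⟩ := h.exists_lift (hG ▸ isGradedRightIdeal_span hGhom)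
  have hz : u <• (𝐳 - s) = 0 := by
    obtain ⟨w, hw, hwu⟩ := h.exists_smul_op_eq hu hπu (gwaZ_sub_mem_gwaComp s) hzS
    have hzz : u <• (𝐳 - s) <• (𝐳 - s) = 0 := by
      rw [← hwu, ← map_smul, smul_op_gwaZ_of_mem_qgrade hzS (by simpa using hw), map_zero]
    have hur : u <• (g₀ * r) = 0 := by
      rw [smul_op_mul, h.smul_op_eq_zero hu hπu hzS hg₀ hg₀S (by simpa using hm₀), smul_zero]
    rw [hr, smul_op_mul, smul_op_add, hzz, zero_add] at hur
    exact eq_zero_of_smul_op_algebraMap (f := f) hβ hur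
  refine h.gradedSplits_of_lift hG hu hπu fun g hg => ?_
  rcases hGm g hg with rfl | ⟨i, hi, him⟩
  · exact hz
  · exact h.smul_op_eq_zero hu hπu hzS hi (hG ▸ Submodule.subset_span hg) (by simpa using him)

section Uniqueness

variable {ι : (GWA k f ⧸ IT) →ₗ[(GWA k f)ᵐᵒᵖ] E} {π : E →ₗ[(GWA k f)ᵐᵒᵖ] (GWA k f ⧸ IS)}
  {g₀ : GWA k f} {i₀ : ℤ}

/-- If all generators of `I_S` except `g₀` act by zero on every lift of the generator, then a
nonsplit extension is determined by a nonzero scalar describing the action of `g₀`. -/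
theorem exists_lift_of_not_gradedSplits (h : IsGradedExt k f IT t IS s 0 E gE ι π)
    (hns : ¬ GradedSplits k f IS s E gE π) (hG : IS = Submodule.span (GWA k f)ᵐᵒᵖ G)
    (hg₀ : g₀ ∈ gwaComp k f i₀) (hg₀S : g₀ ∈ IS)
    (hGm : ∀ g ∈ G, g = g₀ ∨ ∃ i, g ∈ gwaComp k f i ∧ gwaMon k f (s + i - t) ∈ IT)
    (hzT : 𝐳 - t ∈ IT) :
    ∃ u ∈ gE s, π u = Submodule.Quotient.mk 1 ∧ (∀ g ∈ G, g = g₀ ∨ u <• g = 0) ∧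
      ∃ c : k, c ≠ 0 ∧ u <• g₀ = ι (Submodule.Quotient.mk (gwaMon k f (s + i₀ - t)) <•
        algebraMap k (GWA k f) c) := by
  have hGhom : ∀ g ∈ G, ∃ i, g ∈ gwaComp k f i := fun g hg => by
    rcases hGm g hg with rfl | ⟨i, hi, -⟩
    exacts [⟨i₀, hg₀⟩, ⟨i, hi⟩]
  obtain ⟨u, hu, hπu⟩ := h.exists_lift (hG ▸ isGradedRightIdeal_span hGhom)
  have hann : ∀ g ∈ G, g = g₀ ∨ u <• g = 0 := fun g hg => (hGm g hg).imp_right fun ⟨i, hi, him⟩ =>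
    h.smul_op_eq_zero hu hπu hzT hi (hG ▸ Submodule.subset_span hg) (by simpa using him)
  refine ⟨u, hu, hπu, hann, ?_⟩
  obtain ⟨w, hw, hwu⟩ := h.exists_smul_op_eq hu hπu hg₀ hg₀S
  rw [sub_zero] at hw
  obtain ⟨c, rfl⟩ := exists_smul_of_mem_qgrade hzT hw
  refine ⟨c, ?_, hwu.symm⟩
  rintro rfl
  rw [map_zero, MulOpposite.op_zero, zero_smul, map_zero] at hwu
  refine hns (h.gradedSplits_of_lift hG hu hπu fun g hg => ?_)
  rcases hann g hg with rfl | hg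
  exacts [hwu.symm, hg]

variable {E' : ModuleCat.{0} (GWA k f)ᵐᵒᵖ} {gE' : ℤ → Set E'}
  {ι' : (GWA k f ⧸ IT) →ₗ[(GWA k f)ᵐᵒᵖ] E'} {π' : E' →ₗ[(GWA k f)ᵐᵒᵖ] (GWA k f ⧸ IS)}

/-- Multiplication by a scalar as an endomorphism of a right module. -/
def scalarHom (M : Type*) [AddCommGroup M] [Module (GWA k f)ᵐᵒᵖ M] (c : k) :
    M →ₗ[(GWA k f)ᵐᵒᵖ] M where
  toFun w := w <• algebraMap k (GWA k f) c
  map_add' := smul_add _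
  map_smul' r w := by
    have := smul_op_mul w (algebraMap k (GWA k f) c) r.unop
    rw [Algebra.commutes, smul_op_mul] at this
    exact this

/-- Two nonsplit extensions whose classes are determined by the action of a single generator
`g₀` of `I_S` are equivalent up to a nonzero scalar. -/
theorem exists_hom_of_not_gradedSplits (h : IsGradedExt k f IT t IS s 0 E gE ι π)
    (hns : ¬ GradedSplits k f IS s E gE π) (h' : IsGradedExt k f IT t IS s 0 E' gE' ι' π')
    (hns' : ¬ GradedSplits k f IS s E' gE' π') (hG : IS = Submodule.span (GWA k f)ᵐᵒᵖ G)
    (hg₀ : g₀ ∈ gwaComp k f i₀) (hg₀S : g₀ ∈ IS)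
    (hGm : ∀ g ∈ G, g = g₀ ∨ ∃ i, g ∈ gwaComp k f i ∧ gwaMon k f (s + i - t) ∈ IT)
    (hzT : 𝐳 - t ∈ IT) :
    ∃ c : k, c ≠ 0 ∧ ∃ ψ : E →ₗ[(GWA k f)ᵐᵒᵖ] E',
      (∀ w : GWA k f ⧸ IT, ψ (ι w) = ι' (w <• algebraMap k (GWA k f) c)) ∧
      (∀ e : E, π' (ψ e) = π e) ∧ ∀ n, ψ '' gE n ⊆ gE' n := by
  obtain ⟨u, hu, hπu, hann, c, hc, hcu⟩ :=
    h.exists_lift_of_not_gradedSplits hns hG hg₀ hg₀S hGm hzT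
  obtain ⟨u', hu', hπu', hann', c', hc', hcu'⟩ :=
    h'.exists_lift_of_not_gradedSplits hns' hG hg₀ hg₀S hGm hzT
  have hl : c' / c ≠ 0 := div_ne_zero hc' hc
  set l := c' / c with hldef
  have hcl : c * l = c' := by rw [hldef]; field_simp
  refine ⟨l, hl, ?_⟩
  have hIS : ∀ a ∈ IS, ∃ w, u <• a = ι w ∧ u' <• a = ι' (w <• algebraMap k (GWA k f) l) := by
    intro a ha
    rw [hG] at ha
    induction ha using Submodule.span_induction with
    | zero => exact ⟨0, by simp⟩
    | add a b _ _ ha hb =>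
      obtain ⟨w, hw, hw'⟩ := ha
      obtain ⟨v, hv, hv'⟩ := hb
      exact ⟨w + v, by rw [smul_op_add, hw, hv, map_add],
        by rw [smul_op_add, hw', hv', smul_add, map_add]⟩
    | smul r a _ ha =>
      obtain ⟨w, hw, hw'⟩ := ha
      refine ⟨r • w, ?_, ?_⟩
      · rw [map_smul, ← hw]
        exact smul_op_mul u a r.unop
      · rw [show (r • w) <• algebraMap k (GWA k f) l = r • (w <• algebraMap k (GWA k f) l) from
          (scalarHom _ l).map_smul r w, map_smul, ← hw']
        exact smul_op_mul u' a r.unop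
    | mem g hg =>
      by_cases hgg : g = g₀
      · refine ⟨_, hgg ▸ hcu, ?_⟩
        rw [hgg, hcu', ← smul_op_mul, ← map_mul, hcl]
      · exact ⟨0, by simp [(hann g hg).resolve_left hgg],
          by simp [(hann' g hg).resolve_left hgg]⟩
  let Φ : (GWA k f × (GWA k f ⧸ IT)) →ₗ[(GWA k f)ᵐᵒᵖ] E := (smulOpHom u).coprod ι
  let Φ' : (GWA k f × (GWA k f ⧸ IT)) →ₗ[(GWA k f)ᵐᵒᵖ] E' :=
    (smulOpHom u').coprod (ι' ∘ₗ scalarHom _ l)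
  have hker : LinearMap.ker Φ ≤ LinearMap.ker Φ' := by
    rintro ⟨a, w⟩ haw
    change u <• a + ι w = 0 at haw
    change u' <• a + ι' (w <• algebraMap k (GWA k f) l) = 0
    have ha : a ∈ IS := by
      have := congrArg π haw
      rw [map_add, map_smul, hπu, mk_one_smul_op, map_zero,
        h.map_map_eq_zero, add_zero] at this
      exact (Submodule.Quotient.mk_eq_zero _).1 this
    obtain ⟨v, hv, hv'⟩ := hIS a ha
    rw [hv, ← map_add] at haw
    have hvw : v + w = 0 := h.2.1 (by rw [haw, map_zero])
    rw [hv', ← map_add, ← smul_add, hvw, smul_zero, map_zero]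
  have hdecomp (e : E) {a : GWA k f} (ha : π e = Submodule.Quotient.mk a) : π (e - u <• a) = 0 := by
    rw [map_sub, map_smul, hπu, mk_one_smul_op, ha, sub_self]
  have hsurj : Function.Surjective Φ := by
    intro e
    obtain ⟨a, ha⟩ := Submodule.Quotient.mk_surjective IS (π e)
    obtain ⟨w, hw⟩ : e - u <• a ∈ LinearMap.range ι := h.2.2.2.1 ▸ hdecomp e ha.symm
    exact ⟨(a, w), by
      change u <• a + ι w = e
      rw [hw, add_sub_cancel]⟩
  let ψ : E →ₗ[(GWA k f)ᵐᵒᵖ] E' := (LinearMap.ker Φ).liftQ Φ' hker ∘ₗ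
    (LinearMap.quotKerEquivOfSurjective Φ hsurj).symm.toLinearMap
  have hψ (a : GWA k f) (w : GWA k f ⧸ IT) :
      ψ (u <• a + ι w) = u' <• a + ι' (w <• algebraMap k (GWA k f) l) := by
    have : (LinearMap.quotKerEquivOfSurjective Φ hsurj).symm (u <• a + ι w) =
        Submodule.Quotient.mk (a, w) := by
      rw [LinearEquiv.symm_apply_eq]
      rfl
    change (LinearMap.ker Φ).liftQ Φ' hker _ = _
    rw [LinearEquiv.coe_coe, this]
    rfl
  refine ⟨ψ, fun w => ?_, fun e => ?_, ?_⟩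
  · simpa using hψ 0 w
  · obtain ⟨⟨a, w⟩, rfl⟩ := hsurj e
    change π' (ψ (u <• a + ι w)) = π (u <• a + ι w)
    rw [hψ, map_add, map_add, h.map_map_eq_zero, h'.map_map_eq_zero, map_smul π', map_smul π,
      hπu, hπu']
  · rintro n _ ⟨e, he, rfl⟩
    obtain ⟨a, ha, hae⟩ := h.2.2.2.2.2 n ⟨e, he, rfl⟩
    obtain ⟨w, hw, hwe⟩ := h.exists_of_map_eq_zero
      (h.1.sub_mem he (h.1.smul_mem hu ha (by ring))) (hdecomp e hae.symm)
    rw [eq_add_of_sub_eq' hwe.symm, hψ]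
    refine h'.1.add_mem (h'.1.smul_mem hu' ha (by ring)) (h'.2.2.2.2.1 n ⟨_, ?_, rfl⟩)
    simpa using smul_op_mem_qgrade hw (algebraMap_mem_gwaComp l)

end Uniqueness

end IsGradedExt

end DegreeZeroExtensions

section WeightModules

open scoped RightActions
open MulOpposite (op unop)

variable {k f}

local notation "𝐱" => gwaX k f
local notation "𝐲" => gwaY k f
local notation "𝐳" => gwaZ k f

/-- The endomorphism of `ℤ → k` by which `z` acts on a weight module. -/
def weightZ (k : Type) [Field k] : Module.End k (ℤ → k) where
  toFun v n := n * v n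
  map_add' v w := by ext n; simp [mul_add]
  map_smul' c v := by ext n; simp [mul_left_comm]

/-- The weighted shift by which `x` acts on a weight module. -/
def weightX (a : ℤ → k) : Module.End k (ℤ → k) where
  toFun v n := a (n - 1) * v (n - 1)
  map_add' v w := by ext n; simp [mul_add]
  map_smul' c v := by ext n; simp [mul_left_comm]

/-- The weighted shift by which `y` acts on a weight module. -/
def weightY (b : ℤ → k) : Module.End k (ℤ → k) where
  toFun v n := b (n + 1) * v (n + 1)
  map_add' v w := by ext n; simp [mul_add]
  map_smul' c v := by ext n; simp [mul_left_comm]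

theorem unop_aeval_weightZ (p : k[X]) (v : ℤ → k) (n : ℤ) :
    (aeval (op (weightZ k)) p).unop v n = p.eval (n : k) * v n := by
  induction p using Polynomial.induction_on' generalizing v with
  | add p q hp hq => simp [add_mul, hp, hq]
  | monomial m c =>
    induction m generalizing v with
    | zero => simp
    | succ m ih =>
      rw [← monomial_mul_X, map_mul, aeval_X, MulOpposite.unop_mul, Module.End.mul_apply,
        eval_mul, eval_X]
      change (n : k) * (aeval (op (weightZ k)) (monomial m c)).unop v n = _
      rw [ih]
      ring

variable (k f) in
/-- Structure constants of a right `A(f)`-module of functions on `ℤ` in which `z` acts on the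
basis vector of weight `n` as multiplication by `n`. -/
structure WeightData where
  /-- The coefficients of the action of `x`. -/
  up : ℤ → k
  /-- The coefficients of the action of `y`. -/
  down : ℤ → k
  up_mul_down : ∀ n : ℤ, up n * down (n + 1) = f.eval (n : k)

namespace WeightData

variable (W : WeightData k f)

/-- The right action of `A(f)` on the weight module. -/
def rep : GWA k f →ₐ[k] (Module.End k (ℤ → k))ᵐᵒᵖ :=
  RingQuot.liftAlgHom k
    ⟨FreeAlgebra.lift k ![op (weightX W.up), op (weightY W.down), op (weightZ k)], by
      rintro _ _ (_ | _ | _ | _)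
      all_goals
        refine MulOpposite.unop_injective (LinearMap.ext fun v => funext fun n => ?_)
      · simp only [map_mul, map_add, map_one, FreeAlgebra.lift_ι_apply, Matrix.cons_val]
        change (n : k) * (W.up (n - 1) * v (n - 1)) =
          W.up (n - 1) * (((n - 1 : ℤ) : k) * v (n - 1) + v (n - 1))
        push_cast
        ring
      · simp only [map_mul, map_sub, map_one, FreeAlgebra.lift_ι_apply, Matrix.cons_val]
        change (n : k) * (W.down (n + 1) * v (n + 1)) =
          W.down (n + 1) * (((n + 1 : ℤ) : k) * v (n + 1) - v (n + 1))
        push_cast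
        ring
      · rw [map_mul, ← aeval_algHom_apply]
        simp only [FreeAlgebra.lift_ι_apply, Matrix.cons_val]
        rw [unop_aeval_weightZ, ← W.up_mul_down]
        change W.down (n + 1) * (W.up (n + 1 - 1) * v (n + 1 - 1)) = _
        rw [add_sub_cancel_right]
        ring
      · rw [map_mul, ← aeval_algHom_apply]
        simp only [FreeAlgebra.lift_ι_apply, Matrix.cons_val]
        have h := W.up_mul_down (n - 1)
        rw [sub_add_cancel] at h
        rw [unop_aeval_weightZ, eval_comp, eval_sub, eval_X, eval_one]
        change W.up (n - 1) * (W.down (n - 1 + 1) * v (n - 1 + 1)) = _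
        rw [sub_add_cancel, ← mul_assoc, h]
        push_cast
        rfl⟩

/-- The result of acting on the vector `v` by `a`. -/
def act (v : ℤ → k) (a : GWA k f) : ℤ → k := (W.rep a).unop v

theorem act_mul (v : ℤ → k) (a b : GWA k f) : W.act v (a * b) = W.act (W.act v a) b := by
  simp [act]

theorem act_add (v : ℤ → k) (a b : GWA k f) : W.act v (a + b) = W.act v a + W.act v b := by
  simp [act]

theorem act_sub (v : ℤ → k) (a b : GWA k f) : W.act v (a - b) = W.act v a - W.act v b := by
  simp [act]

theorem act_zero (v : ℤ → k) : W.act v 0 = 0 := by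
  simp [act]

theorem act_one (v : ℤ → k) : W.act v 1 = v := by
  simp [act]

theorem act_algebraMap (v : ℤ → k) (c : k) : W.act v (algebraMap k _ c) = c • v := by
  simp only [act, AlgHom.commutes]
  rfl

theorem smul_act (c : k) (v : ℤ → k) (a : GWA k f) : W.act (c • v) a = c • W.act v a := by
  simp [act]

theorem zero_act (a : GWA k f) : W.act 0 a = 0 := by
  simp [act]

theorem act_gwaX (n : ℤ) : W.act (Pi.single n 1) 𝐱 = W.up n • Pi.single (n + 1) 1 := by
  have : W.rep 𝐱 = op (weightX W.up) :=
    (RingQuot.liftAlgHom_mkAlgHom_apply ..).trans (FreeAlgebra.lift_ι_apply ..)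
  rw [act, this]
  ext m
  simp only [weightX, MulOpposite.unop_op, LinearMap.coe_mk, AddHom.coe_mk, Pi.single_apply,
    Pi.smul_apply, sub_eq_iff_eq_add]
  split_ifs with h
  · simp [h]
  · simp

theorem act_gwaY (n : ℤ) : W.act (Pi.single n 1) 𝐲 = W.down n • Pi.single (n - 1) 1 := by
  have : W.rep 𝐲 = op (weightY W.down) :=
    (RingQuot.liftAlgHom_mkAlgHom_apply ..).trans (FreeAlgebra.lift_ι_apply ..)
  rw [act, this]
  ext m
  simp only [weightY, MulOpposite.unop_op, LinearMap.coe_mk, AddHom.coe_mk, Pi.single_apply,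
    Pi.smul_apply, eq_sub_iff_add_eq]
  split_ifs with h
  · simp [h]
  · simp

theorem act_gwaZ_sub (n : ℤ) : W.act (Pi.single n 1) (𝐳 - n) = 0 := by
  have : W.rep 𝐳 = op (weightZ k) :=
    (RingQuot.liftAlgHom_mkAlgHom_apply ..).trans (FreeAlgebra.lift_ι_apply ..)
  rw [act_sub, ← map_intCast (algebraMap k (GWA k f)), act_algebraMap, act, this]
  ext m
  simp only [weightZ, MulOpposite.unop_op, LinearMap.coe_mk, AddHom.coe_mk, Pi.single_apply,
    Pi.smul_apply, Pi.sub_apply, Pi.zero_apply]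
  split_ifs with h
  · simp [h]
  · simp

theorem act_gwaX_pow (n : ℤ) (j : ℕ) : W.act (Pi.single n 1) (𝐱 ^ j) =
    (∏ i ∈ Finset.range j, W.up (n + i)) • Pi.single (n + j) 1 := by
  induction j with
  | zero => simp [act_one]
  | succ j ih =>
    rw [pow_succ, act_mul, ih, smul_act, act_gwaX, smul_smul, Finset.prod_range_succ,
      Nat.cast_succ, add_assoc]

theorem act_gwaY_pow (n : ℤ) (j : ℕ) : W.act (Pi.single n 1) (𝐲 ^ j) =
    (∏ i ∈ Finset.range j, W.down (n - i)) • Pi.single (n - j) 1 := by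
  induction j with
  | zero => simp [act_one]
  | succ j ih =>
    rw [pow_succ, act_mul, ih, smul_act, act_gwaY, smul_smul, Finset.prod_range_succ,
      Nat.cast_succ, sub_sub]

theorem smul_single_ne_zero {c : k} (hc : c ≠ 0) (n : ℤ) : c • (Pi.single n 1 : ℤ → k) ≠ 0 :=
  smul_ne_zero hc (by simp)

theorem exists_act_eq_smul (s : ℤ) {n : ℤ} {a : GWA k f} (ha : a ∈ gwaComp k f n) :
    ∃ c : k, W.act (Pi.single s 1) a = c • Pi.single (s + n) 1 := by
  obtain ⟨c, b, rfl⟩ := exists_eq_add_of_mem_gwaComp s ha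
  suffices h : ∃ c : k, W.act (Pi.single s 1) (gwaMon k f n) = c • Pi.single (s + n) 1 by
    obtain ⟨c', hc'⟩ := h
    exact ⟨c * c', by rw [act_add, act_mul, act_mul, act_algebraMap, smul_act, hc', act_gwaZ_sub,
      zero_act, add_zero, smul_smul]⟩
  obtain ⟨n, rfl | rfl⟩ := n.eq_nat_or_neg
  · exact ⟨_, gwaMon_natCast (k := k) (f := f) n ▸ W.act_gwaX_pow s n⟩
  · exact ⟨_, gwaMon_neg_natCast (k := k) (f := f) n ▸ W.act_gwaY_pow s n⟩

/-- The annihilator of the basis vector of weight `s`. -/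
def ann (s : ℤ) : Submodule (GWA k f)ᵐᵒᵖ (GWA k f) where
  carrier := {a | W.act (Pi.single s 1) a = 0}
  zero_mem' := W.act_zero _
  add_mem' {a b} ha hb := by
    rw [Set.mem_ofPred_eq] at ha hb ⊢
    rw [act_add, ha, hb, add_zero]
  smul_mem' r a ha := by
    change W.act _ (a * r.unop) = 0
    rw [act_mul, show W.act _ a = 0 from ha, zero_act]

theorem mem_ann {s : ℤ} {a : GWA k f} : a ∈ W.ann s ↔ W.act (Pi.single s 1) a = 0 := Iff.rfl

theorem act_gwaProj (s n : ℤ) (a : GWA k f) : W.act (Pi.single s 1) (gwaProj n a) =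
    W.act (Pi.single s 1) a (s + n) • Pi.single (s + n) 1 := by
  induction a using gwaComp_induction with
  | hadd a b ha hb => rw [map_add, act_add, ha, hb, act_add, Pi.add_apply, add_smul]
  | hmem m a ha =>
    obtain ⟨c, hc⟩ := W.exists_act_eq_smul s ha
    rw [gwaProj_of_mem ha]
    split_ifs with h
    · simp [h, hc]
    · simp [hc, act_zero, h]

theorem isGradedRightIdeal_ann (s : ℤ) : IsGradedRightIdeal (W.ann s) := by
  intro a ha n
  rw [mem_ann] at ha ⊢
  rw [act_gwaProj, ha, Pi.zero_apply, zero_smul]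

theorem gwaZ_sub_mem_ann (s : ℤ) : 𝐳 - s ∈ W.ann s := W.act_gwaZ_sub s

theorem ann_le {s : ℤ} {I : Submodule (GWA k f)ᵐᵒᵖ (GWA k f)} (hz : 𝐳 - s ∈ I)
    (hI : ∀ n, gwaMon k f n ∈ I ∨ gwaMon k f n ∉ W.ann s) : W.ann s ≤ I := by
  intro a ha
  obtain ⟨S, hS⟩ := exists_sum_gwaProj a
  rw [hS]
  refine sum_mem fun n _ => ?_
  obtain ⟨c, b, hcb⟩ := exists_eq_add_of_mem_gwaComp s (gwaProj_mem n a)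
  have hn := W.isGradedRightIdeal_ann s a ha n
  rw [hcb, (W.ann s).add_mem_iff_left (mul_mem_of_mem (W.gwaZ_sub_mem_ann s) b)] at hn
  rw [hcb]
  refine add_mem ?_ (mul_mem_of_mem hz b)
  rcases hI n with h | h
  · rw [Algebra.commutes]
    exact mul_mem_of_mem h _
  · rw [mem_ann, act_mul, act_algebraMap, smul_act] at hn
    rcases smul_eq_zero.1 hn with rfl | hn
    · simp
    · exact absurd hn h

/-- A weight module whose basis vectors of weights `s` and `t = s + deg h` generate modules that
detect `I_S` and `I_T` provides a nonsplit extension of `(A/I_S)⟨s⟩` by `(A/I_T)⟨t⟩`. -/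
theorem exists_not_gradedSplits {s t : ℤ} {GS GT : Set (GWA k f)}
    {IS IT : Submodule (GWA k f)ᵐᵒᵖ (GWA k f)} (hGS : IS = Submodule.span (GWA k f)ᵐᵒᵖ GS)
    (hGT : IT = Submodule.span (GWA k f)ᵐᵒᵖ GT) (hzS : 𝐳 - s ∈ IS) (hzT : 𝐳 - t ∈ IT)
    (hone : (1 : GWA k f) ∉ IS)
    (hS : ∀ n, gwaMon k f n ∈ IS ∨ gwaMon k f n ∉ W.ann s)
    (hT : ∀ n, gwaMon k f n ∈ IT ∨ gwaMon k f n ∉ W.ann t)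
    (hGTann : ∀ g ∈ GT, g ∈ W.ann t) {h : GWA k f} (hh : h ∈ gwaComp k f (t - s)) (hhS : h ∈ IS)
    {c : k} (hc : c ≠ 0) (hact : W.act (Pi.single s 1) h = c • Pi.single t 1)
    (hGSact : ∀ g ∈ GS, ∃ b, W.act (Pi.single s 1) g = W.act (Pi.single t 1) b) :
    ∃ (E : ModuleCat.{0} (GWA k f)ᵐᵒᵖ) (gE : ℤ → Set E)
      (ι : (GWA k f ⧸ IT) →ₗ[(GWA k f)ᵐᵒᵖ] E) (π : E →ₗ[(GWA k f)ᵐᵒᵖ] (GWA k f ⧸ IS)),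
      IsGradedExt k f IT t IS s 0 E gE ι π ∧ ¬ GradedSplits k f IS s E gE π := by
  have hIT : IT = W.ann t := by
    refine le_antisymm ?_ (W.ann_le hzT hT)
    rw [hGT, Submodule.span_le]
    exact hGTann
  have hle : W.ann s ≤ IS := W.ann_le hzS hS
  have hmul (a : GWA k f) : h * a ∈ W.ann s ↔ a ∈ IT := by
    rw [mem_ann, act_mul, hact, smul_act, hIT, mem_ann, smul_eq_zero, or_iff_right hc]
  let φ : GWA k f →ₗ[(GWA k f)ᵐᵒᵖ] GWA k f ⧸ W.ann s := smulOpHom (Submodule.Quotient.mk h)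
  have hφ (a : GWA k f) : φ a = 0 ↔ a ∈ IT :=
    (Submodule.Quotient.mk_eq_zero _).trans (hmul a)
  let ι : (GWA k f ⧸ IT) →ₗ[(GWA k f)ᵐᵒᵖ] GWA k f ⧸ W.ann s :=
    IT.liftQ φ fun a ha => (hφ a).2 ha
  let π : (GWA k f ⧸ W.ann s) →ₗ[(GWA k f)ᵐᵒᵖ] GWA k f ⧸ IS := Submodule.factor hle
  have hι (a : GWA k f) : ι (Submodule.Quotient.mk a) = Submodule.Quotient.mk (h * a) := rfl
  have hπ (a : GWA k f) : π (Submodule.Quotient.mk a) = Submodule.Quotient.mk a := rfl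
  have hdecomp : ∀ a ∈ IS, ∃ b, a - h * b ∈ W.ann s := by
    intro a ha
    rw [hGS] at ha
    induction ha using Submodule.span_induction with
    | zero => exact ⟨0, by simp⟩
    | add a a' _ _ ha ha' =>
      obtain ⟨b, hb⟩ := ha
      obtain ⟨b', hb'⟩ := ha'
      refine ⟨b + b', ?_⟩
      rw [mul_add, add_sub_add_comm]
      exact add_mem hb hb'
    | smul r a _ ha =>
      obtain ⟨b, hb⟩ := ha
      refine ⟨b * r.unop, ?_⟩
      rw [← mul_assoc, show r • a = a * r.unop from rfl, ← sub_mul]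
      exact mul_mem_of_mem hb _
    | mem g hg =>
      obtain ⟨b, hb⟩ := hGSact g hg
      refine ⟨algebraMap k _ c⁻¹ * b, ?_⟩
      rw [mem_ann, act_sub, act_mul, act_mul, hact, act_algebraMap, smul_smul,
        inv_mul_cancel₀ hc, one_smul, hb, sub_self]
  refine ⟨ModuleCat.of _ (GWA k f ⧸ W.ann s), qgrade k f (W.ann s) s, ι, π,
    ⟨isGrading_qgrade (W.isGradedRightIdeal_ann s) s, ?_, ?_, ?_, ?_, ?_⟩, ?_⟩
  · refine LinearMap.ker_eq_bot.1 (LinearMap.ker_eq_bot'.2 fun w hw => ?_)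
    obtain ⟨a, rfl⟩ := Submodule.Quotient.mk_surjective IT w
    exact (Submodule.Quotient.mk_eq_zero _).2 ((hφ a).1 hw)
  · intro w
    obtain ⟨a, rfl⟩ := Submodule.Quotient.mk_surjective IS w
    exact ⟨Submodule.Quotient.mk a, rfl⟩
  · ext w
    obtain ⟨a, rfl⟩ := Submodule.Quotient.mk_surjective (W.ann s) w
    rw [LinearMap.mem_ker, hπ, Submodule.Quotient.mk_eq_zero]
    constructor
    · rintro ⟨w, hw⟩
      obtain ⟨b, rfl⟩ := Submodule.Quotient.mk_surjective IT w
      rw [hι, Submodule.Quotient.eq] at hw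
      exact ((Submodule.sub_mem_iff_right _ (mul_mem_of_mem hhS b)).1 (hle hw))
    · intro ha
      obtain ⟨b, hb⟩ := hdecomp a ha
      exact ⟨Submodule.Quotient.mk b, ((Submodule.Quotient.eq _).2 hb).symm⟩
  · rintro n _ ⟨_, ⟨a, ha, rfl⟩, rfl⟩
    refine ⟨h * a, ?_, rfl⟩
    have := mul_mem_gwaComp hh ha
    rwa [show t - s + (n - 0 - t) = n - s by ring] at this
  · rintro n _ ⟨_, ⟨a, ha, rfl⟩, rfl⟩
    exact ⟨a, ha, rfl⟩
  · rintro ⟨sec, hsec, hdeg⟩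
    obtain ⟨a, ha, hasec⟩ := hdeg s ⟨_, mk_one_mem_qgrade IS s, rfl⟩
    rw [sub_self] at ha
    obtain ⟨r, b, rfl⟩ := exists_eq_add_of_mem_gwaComp s ha
    have hzero : sec (Submodule.Quotient.mk 1) <• h = 0 := by
      rw [← map_smul, mk_one_smul_op, (Submodule.Quotient.mk_eq_zero _).2 hhS, map_zero]
    rw [← hasec, mk_smul_op, Submodule.Quotient.mk_eq_zero, mem_ann, act_mul, act_add, act_mul,
      act_mul, act_gwaZ_sub, zero_act, add_zero, act_algebraMap, gwaMon_zero, act_one, smul_act,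
      hact, smul_smul] at hzero
    have hr : r = 0 := by
      by_contra hr
      exact smul_single_ne_zero (mul_ne_zero hr hc) t hzero
    have hid := LinearMap.congr_fun hsec (Submodule.Quotient.mk 1)
    rw [LinearMap.comp_apply, ← hasec, hπ, LinearMap.id_apply, Submodule.Quotient.eq, hr,
      map_zero, zero_mul, zero_add, Submodule.sub_mem_iff_right _ (mul_mem_of_mem hzS b)] at hid
    exact hone hid

end WeightData

end WeightModules

section ExtCriteria

variable {k f}

local notation "𝐳" => gwaZ k f

variable {IT IS : Submodule (GWA k f)ᵐᵒᵖ (GWA k f)} {t s : ℤ} {G : Set (GWA k f)} [CharZero k]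

theorem extVanishes_of_gwaMon_mem (hG : IS = Submodule.span (GWA k f)ᵐᵒᵖ G)
    (hGm : ∀ g ∈ G, ∃ i, g ∈ gwaComp k f i ∧ gwaMon k f (s + i - t) ∈ IT)
    (hzS : 𝐳 - s ∈ IS) (hzT : 𝐳 - t ∈ IT) : ExtVanishes k f IT t IS s := by
  intro d E gE ι π h
  rcases eq_or_ne d 0 with rfl | hd
  · exact h.gradedSplits_of_gwaMon_mem hG hGm hzT
  · exact h.gradedSplits_of_degree_ne_zero hd hG
      (fun g hg => (hGm g hg).imp fun _ => And.left) hzS hzT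

theorem extVanishes_self (hG : IS = Submodule.span (GWA k f)ᵐᵒᵖ G)
    (hGm : ∀ g ∈ G, g = 𝐳 - s ∨ ∃ i, g ∈ gwaComp k f i ∧ gwaMon k f i ∈ IS) (hzS : 𝐳 - s ∈ IS)
    {i₀ : ℤ} {g₀ r : GWA k f} {β : k} (hg₀ : g₀ ∈ gwaComp k f i₀) (hg₀S : g₀ ∈ IS)
    (hm₀ : gwaMon k f i₀ ∈ IS) (hr : g₀ * r = (𝐳 - s) * (𝐳 - s + algebraMap k _ β))
    (hβ : β ≠ 0) : ExtVanishes k f IS s IS s := by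
  intro d E gE ι π h
  rcases eq_or_ne d 0 with rfl | hd
  · exact h.gradedSplits_self hG hGm hzS hg₀ hg₀S hm₀ hr hβ
  · refine h.gradedSplits_of_degree_ne_zero hd hG (fun g hg => ?_) hzS hzS
    rcases hGm g hg with rfl | ⟨i, hi, -⟩
    exacts [⟨0, gwaZ_sub_mem_gwaComp s⟩, ⟨i, hi⟩]

theorem extOneDim_of_exists_not_gradedSplits (hG : IS = Submodule.span (GWA k f)ᵐᵒᵖ G)
    {g₀ : GWA k f} {i₀ : ℤ} (hg₀ : g₀ ∈ gwaComp k f i₀) (hg₀S : g₀ ∈ IS)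
    (hGm : ∀ g ∈ G, g = g₀ ∨ ∃ i, g ∈ gwaComp k f i ∧ gwaMon k f (s + i - t) ∈ IT)
    (hzS : 𝐳 - s ∈ IS) (hzT : 𝐳 - t ∈ IT)
    (hex : ∃ (E : ModuleCat.{0} (GWA k f)ᵐᵒᵖ) (gE : ℤ → Set E)
      (ι : (GWA k f ⧸ IT) →ₗ[(GWA k f)ᵐᵒᵖ] E) (π : E →ₗ[(GWA k f)ᵐᵒᵖ] (GWA k f ⧸ IS)),
      IsGradedExt k f IT t IS s 0 E gE ι π ∧ ¬ GradedSplits k f IS s E gE π) :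
    ExtOneDim k f IT t IS s := by
  refine ⟨fun d hd E gE ι π h => h.gradedSplits_of_degree_ne_zero hd hG (fun g hg => ?_) hzS hzT,
    hex, fun E gE ι π h hns E' gE' ι' π' h' hns' =>
      h.exists_hom_of_not_gradedSplits hns h' hns' hG hg₀ hg₀S hGm hzT⟩
  rcases hGm g hg with rfl | ⟨i, hi, -⟩
  exacts [⟨i₀, hg₀⟩, ⟨i, hi⟩]

end ExtCriteria

section SimpleModules

variable {k f}

local notation "𝐱" => gwaX k f
local notation "𝐲" => gwaY k f
local notation "𝐳" => gwaZ k f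

variable (k f) in
/-- The standard generators of the right ideal defining the simple module `X`. -/
def gensX (α : ℕ) : Set (GWA k f) := {𝐱, 𝐳 + algebraMap k (GWA k f) α}

variable (k f) in
/-- The standard generators of the right ideal defining the simple module `Y`. -/
def gensY : Set (GWA k f) := {𝐲, 𝐳 - 1}

variable (k f) in
/-- The standard generators of the right ideal defining the simple module `Z`. -/
def gensZ (α : ℕ) : Set (GWA k f) := {𝐲 ^ α, 𝐱, 𝐳}

variable (k f) in
/-- The right ideal `(x, z + α)A`. -/
def idealX (α : ℕ) : Submodule (GWA k f)ᵐᵒᵖ (GWA k f) :=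
  Submodule.span (GWA k f)ᵐᵒᵖ (gensX k f α)

variable (k f) in
/-- The right ideal `(y, z - 1)A`. -/
def idealY : Submodule (GWA k f)ᵐᵒᵖ (GWA k f) := Submodule.span (GWA k f)ᵐᵒᵖ (gensY k f)

variable (k f) in
/-- The right ideal `(y ^ α, x, z)A`. -/
def idealZ (α : ℕ) : Submodule (GWA k f)ᵐᵒᵖ (GWA k f) :=
  Submodule.span (GWA k f)ᵐᵒᵖ (gensZ k f α)

variable {α : ℕ}

theorem gwaZ_add_algebraMap (α : ℕ) :
    𝐳 + algebraMap k (GWA k f) α = 𝐳 - ((-(α : ℤ) : ℤ) : GWA k f) := by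
  push_cast
  rw [sub_neg_eq_add]

theorem gwaZ_sub_one : 𝐳 - 1 = 𝐳 - ((1 : ℤ) : GWA k f) := by
  rw [Int.cast_one]

theorem gwaZ_eq_sub_zero : 𝐳 = 𝐳 - ((0 : ℤ) : GWA k f) := by
  rw [Int.cast_zero, sub_zero]

theorem gwaX_mem_idealX : 𝐱 ∈ idealX k f α := Submodule.subset_span (.inl rfl)

theorem gwaY_mem_idealY : 𝐲 ∈ idealY k f := Submodule.subset_span (.inl rfl)

theorem gwaY_pow_mem_idealZ : 𝐲 ^ α ∈ idealZ k f α := Submodule.subset_span (.inl rfl)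

theorem gwaX_mem_idealZ : 𝐱 ∈ idealZ k f α := Submodule.subset_span (.inr (.inl rfl))

theorem gwaZ_sub_mem_idealX : 𝐳 - ((-(α : ℤ) : ℤ) : GWA k f) ∈ idealX k f α :=
  Submodule.subset_span (.inr (gwaZ_add_algebraMap α).symm)

theorem gwaZ_sub_mem_idealY : 𝐳 - ((1 : ℤ) : GWA k f) ∈ idealY k f :=
  Submodule.subset_span (.inr gwaZ_sub_one.symm)

theorem gwaZ_sub_mem_idealZ : 𝐳 - ((0 : ℤ) : GWA k f) ∈ idealZ k f α :=
  Submodule.subset_span (.inr (.inr gwaZ_eq_sub_zero.symm))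

theorem gwaMon_mem_of_gwaX_mem {I : Submodule (GWA k f)ᵐᵒᵖ (GWA k f)} (hx : 𝐱 ∈ I) {n : ℤ}
    (hn : 0 < n) : gwaMon k f n ∈ I := by
  obtain ⟨m, rfl⟩ : ∃ m : ℕ, n = (m + 1 : ℕ) := ⟨(n - 1).toNat, by omega⟩
  rw [gwaMon_natCast, pow_succ']
  exact mul_mem_of_mem hx _

theorem gwaMon_mem_of_gwaY_pow_mem {I : Submodule (GWA k f)ᵐᵒᵖ (GWA k f)} (hy : 𝐲 ^ α ∈ I) {n : ℤ}
    (hn : n ≤ -α) : gwaMon k f n ∈ I := by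
  obtain ⟨m, rfl⟩ : ∃ m : ℕ, n = -((α + m : ℕ) : ℤ) := ⟨(-n - α).toNat, by omega⟩
  rw [gwaMon_neg_natCast, pow_add]
  exact mul_mem_of_mem hy _

theorem gwaMon_mem_idealX {n : ℤ} (hn : 0 < n) : gwaMon k f n ∈ idealX k f α :=
  gwaMon_mem_of_gwaX_mem gwaX_mem_idealX hn

theorem gwaMon_mem_idealY {n : ℤ} (hn : n < 0) : gwaMon k f n ∈ idealY k f :=
  gwaMon_mem_of_gwaY_pow_mem (α := 1) (by rw [pow_one]; exact gwaY_mem_idealY)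
    (by push_cast; omega)

theorem gwaMon_mem_idealZ {n : ℤ} (hn : 0 < n ∨ n ≤ -α) : gwaMon k f n ∈ idealZ k f α :=
  hn.elim (gwaMon_mem_of_gwaX_mem gwaX_mem_idealZ)
    (gwaMon_mem_of_gwaY_pow_mem gwaY_pow_mem_idealZ)

theorem forall_mem_gensX {p : GWA k f → Prop} :
    (∀ g ∈ gensX k f α, p g) ↔ p 𝐱 ∧ p (𝐳 - ((-(α : ℤ) : ℤ) : GWA k f)) := by
  rw [gensX, gwaZ_add_algebraMap]
  simp

theorem forall_mem_gensY {p : GWA k f → Prop} :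
    (∀ g ∈ gensY k f, p g) ↔ p 𝐲 ∧ p (𝐳 - ((1 : ℤ) : GWA k f)) := by
  rw [gensY, gwaZ_sub_one]
  simp

theorem forall_mem_gensZ {p : GWA k f → Prop} :
    (∀ g ∈ gensZ k f α, p g) ↔ p (𝐲 ^ α) ∧ p 𝐱 ∧ p (𝐳 - ((0 : ℤ) : GWA k f)) := by
  rw [gensZ, ← gwaZ_eq_sub_zero]
  simp

section Vanishing

variable [CharZero k]

theorem extVanishes_idealY_idealX (hα : 0 < α) :
    ExtVanishes k f (idealY k f) 1 (idealX k f α) (-α) :=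
  extVanishes_of_gwaMon_mem (G := gensX k f α) rfl
    (forall_mem_gensX.2 ⟨⟨1, gwaX_mem_gwaComp, gwaMon_mem_idealY (by omega)⟩,
      0, gwaZ_sub_mem_gwaComp _, gwaMon_mem_idealY (by omega)⟩)
    gwaZ_sub_mem_idealX gwaZ_sub_mem_idealY

theorem extVanishes_idealX_idealY (hα : 0 < α) :
    ExtVanishes k f (idealX k f α) (-α) (idealY k f) 1 :=
  extVanishes_of_gwaMon_mem (G := gensY k f) rfl
    (forall_mem_gensY.2 ⟨⟨-1, gwaY_mem_gwaComp, gwaMon_mem_idealX (by omega)⟩,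
      0, gwaZ_sub_mem_gwaComp _, gwaMon_mem_idealX (by omega)⟩)
    gwaZ_sub_mem_idealY gwaZ_sub_mem_idealX

theorem extVanishes_idealX_self (hα : 0 < α) (hf : f = X * (X + C (α : k))) :
    ExtVanishes k f (idealX k f α) (-α) (idealX k f α) (-α) := by
  refine extVanishes_self (G := gensX k f α) (g₀ := 𝐱) (r := 𝐲) (β := -α) (i₀ := 1) rfl
    (forall_mem_gensX.2 ⟨.inr ⟨1, gwaX_mem_gwaComp, gwaMon_mem_idealX one_pos⟩, .inl rfl⟩)
    gwaZ_sub_mem_idealX gwaX_mem_gwaComp gwaX_mem_idealX (gwaMon_mem_idealX one_pos) ?_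
    (by simp [hα.ne'])
  rw [gwaX_mul_gwaY]
  refine (congrArg (aeval 𝐳) (hf.trans (mul_comm _ _))).trans ?_
  simp

theorem extVanishes_idealY_self (hα : 0 < α) (hf : f = X * (X + C (α : k))) :
    ExtVanishes k f (idealY k f) 1 (idealY k f) 1 := by
  refine extVanishes_self (G := gensY k f) (g₀ := 𝐲) (r := 𝐱) (β := α) (i₀ := -1) rfl
    (forall_mem_gensY.2 ⟨.inr ⟨-1, gwaY_mem_gwaComp, gwaMon_mem_idealY (by omega)⟩, .inl rfl⟩)
    gwaZ_sub_mem_idealY gwaY_mem_gwaComp gwaY_mem_idealY (gwaMon_mem_idealY (by omega)) ?_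
    (by simp [hα.ne'])
  rw [gwaY_mul_gwaX]
  refine (congrArg (fun p => aeval 𝐳 (p.comp (X - 1))) hf).trans ?_
  simp

theorem extVanishes_idealZ_self (hα : 0 < α) (hf : f = X * (X + C (α : k))) :
    ExtVanishes k f (idealZ k f α) 0 (idealZ k f α) 0 := by
  refine extVanishes_self (G := gensZ k f α) (g₀ := 𝐱) (r := 𝐲) (β := α) (i₀ := 1) rfl
    (forall_mem_gensZ.2 ⟨.inr ⟨-α, gwaY_pow_mem_gwaComp α, gwaMon_mem_idealZ (.inr le_rfl)⟩,
      .inr ⟨1, gwaX_mem_gwaComp, gwaMon_mem_idealZ (.inl one_pos)⟩, .inl rfl⟩)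
    gwaZ_sub_mem_idealZ gwaX_mem_gwaComp gwaX_mem_idealZ (gwaMon_mem_idealZ (.inl one_pos)) ?_
    (by simp [hα.ne'])
  rw [gwaX_mul_gwaY]
  refine (congrArg (aeval 𝐳) hf).trans ?_
  simp

end Vanishing

namespace WeightData

/-- The weight modules over `A(z(z + α))`, parametrized by the structure constants at the two
places where the composite of `x` and `y` vanishes. -/
def ofRoots (hα : 0 < α) (hf : f = X * (X + C (α : k))) (a₀ b₀ a₁ b₁ : k) (h₀ : a₀ * b₀ = 0)
    (h₁ : a₁ * b₁ = 0) : WeightData k f where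
  up n := if n = 0 then a₀ else if n = -α then a₁ else f.eval (n : k)
  down n := if n = 1 then b₀ else if n = 1 - α then b₁ else 1
  up_mul_down n := by
    rcases eq_or_ne n 0 with rfl | hn
    · simp [h₀, hf]
    rcases eq_or_ne n (-α) with rfl | hn'
    · rw [if_neg hn, if_pos rfl, if_neg (by omega), if_pos (by omega), h₁, hf]
      simp
    · rw [if_neg hn, if_neg hn', if_neg (by omega), if_neg (by omega), mul_one]

variable {hα : 0 < α} {hf : f = X * (X + C (α : k))} {a₀ b₀ a₁ b₁ : k} {h₀ : a₀ * b₀ = 0}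
  {h₁ : a₁ * b₁ = 0}

local notation "𝐖" => ofRoots hα hf a₀ b₀ a₁ b₁ h₀ h₁

theorem ofRoots_up_zero : (𝐖).up 0 = a₀ := by
  simp [ofRoots]

theorem ofRoots_up_neg : (𝐖).up (-α) = a₁ := by
  simp [ofRoots, hα.ne']

theorem ofRoots_down_one : (𝐖).down 1 = b₀ := by
  simp [ofRoots]

theorem ofRoots_down_one_sub : (𝐖).down (1 - α) = b₁ := by
  simp [ofRoots, hα.ne']

theorem ofRoots_down {n : ℤ} (hn : n ≠ 1) (hn' : n ≠ 1 - α) : (𝐖).down n = 1 := by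
  simp [ofRoots, hn, hn']

theorem ofRoots_up_ne_zero [CharZero k] {n : ℤ} (hn : n ≠ 0) (hn' : n ≠ -α) : (𝐖).up n ≠ 0 := by
  have h : n + α ≠ 0 := by omega
  simp only [ofRoots, if_neg hn, if_neg hn']
  rw [hf, eval_mul, eval_add, eval_X, eval_C]
  exact mul_ne_zero (by exact_mod_cast hn) (by exact_mod_cast h)

theorem gwaX_pow_notMem_ann (W : WeightData k f) {n : ℤ} {j : ℕ} (h : ∀ i < j, W.up (n + i) ≠ 0) :
    𝐱 ^ j ∉ W.ann n := by
  rw [mem_ann, act_gwaX_pow]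
  exact smul_single_ne_zero (Finset.prod_ne_zero_iff.2 fun i hi => h i (Finset.mem_range.1 hi)) _

theorem gwaY_pow_notMem_ann (W : WeightData k f) {n : ℤ} {j : ℕ}
    (h : ∀ i < j, W.down (n - i) ≠ 0) : 𝐲 ^ j ∉ W.ann n := by
  rw [mem_ann, act_gwaY_pow]
  exact smul_single_ne_zero (Finset.prod_ne_zero_iff.2 fun i hi => h i (Finset.mem_range.1 hi)) _

theorem gwaMon_mem_idealX_or (n : ℤ) :
    gwaMon k f n ∈ idealX k f α ∨ gwaMon k f n ∉ (𝐖).ann (-α) := by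
  obtain hn | hn := lt_or_ge 0 n
  · exact .inl (gwaMon_mem_idealX hn)
  obtain ⟨j, rfl⟩ : ∃ j : ℕ, n = -j := ⟨(-n).toNat, by omega⟩
  rw [gwaMon_neg_natCast]
  refine .inr (gwaY_pow_notMem_ann _ fun i _ => ?_)
  rw [ofRoots_down (by omega) (by omega)]
  exact one_ne_zero

theorem gwaMon_mem_idealY_or [CharZero k] (n : ℤ) :
    gwaMon k f n ∈ idealY k f ∨ gwaMon k f n ∉ (𝐖).ann 1 := by
  obtain hn | hn := lt_or_ge n 0
  · exact .inl (gwaMon_mem_idealY hn)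
  lift n to ℕ using hn
  rw [gwaMon_natCast]
  exact .inr (gwaX_pow_notMem_ann _ fun i _ => ofRoots_up_ne_zero (by omega) (by omega))

theorem gwaMon_mem_idealZ_or (n : ℤ) :
    gwaMon k f n ∈ idealZ k f α ∨ gwaMon k f n ∉ (𝐖).ann 0 := by
  by_cases hn : 0 < n ∨ n ≤ -α
  · exact .inl (gwaMon_mem_idealZ hn)
  obtain ⟨j, rfl⟩ : ∃ j : ℕ, n = -j := ⟨(-n).toNat, by omega⟩
  rw [gwaMon_neg_natCast]
  refine .inr (gwaY_pow_notMem_ann _ fun i _ => ?_)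
  rw [ofRoots_down (by omega) (by omega)]
  exact one_ne_zero

theorem gensX_subset_ann (ha₁ : a₁ = 0) : ∀ g ∈ gensX k f α, g ∈ (𝐖).ann (-α) :=
  forall_mem_gensX.2 ⟨by rw [mem_ann, act_gwaX, ofRoots_up_neg, ha₁, zero_smul],
    gwaZ_sub_mem_ann _ _⟩

theorem gensY_subset_ann (hb₀ : b₀ = 0) : ∀ g ∈ gensY k f, g ∈ (𝐖).ann 1 :=
  forall_mem_gensY.2 ⟨by rw [mem_ann, act_gwaY, ofRoots_down_one, hb₀, zero_smul],
    gwaZ_sub_mem_ann _ _⟩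

theorem gwaY_pow_mem_ann (hb₁ : b₁ = 0) : 𝐲 ^ α ∈ (𝐖).ann 0 := by
  rw [mem_ann, act_gwaY_pow, Finset.prod_eq_zero (i := α - 1) (by simpa using hα), zero_smul]
  rw [show (0 : ℤ) - (α - 1 : ℕ) = 1 - α by omega, ofRoots_down_one_sub, hb₁]

theorem gensZ_subset_ann (ha₀ : a₀ = 0) (hb₁ : b₁ = 0) : ∀ g ∈ gensZ k f α, g ∈ (𝐖).ann 0 :=
  forall_mem_gensZ.2 ⟨gwaY_pow_mem_ann hb₁,
    by rw [mem_ann, act_gwaX, ofRoots_up_zero, ha₀, zero_smul], gwaZ_sub_mem_ann _ _⟩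

theorem one_notMem_span (W : WeightData k f) {s : ℤ} {G : Set (GWA k f)}
    (hG : ∀ g ∈ G, g ∈ W.ann s) : (1 : GWA k f) ∉ Submodule.span (GWA k f)ᵐᵒᵖ G := by
  intro h
  have h1 : (1 : GWA k f) ∈ W.ann s := Submodule.span_le.2 hG h
  rw [mem_ann, act_one] at h1
  simp at h1

end WeightData

section OneDimensional

open WeightData

theorem one_notMem_idealX (hα : 0 < α) (hf : f = X * (X + C (α : k))) : 1 ∉ idealX k f α :=
  (ofRoots hα hf 0 0 0 0 (zero_mul 0) (zero_mul 0)).one_notMem_span (gensX_subset_ann rfl)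

theorem one_notMem_idealY (hα : 0 < α) (hf : f = X * (X + C (α : k))) : 1 ∉ idealY k f :=
  (ofRoots hα hf 0 0 0 0 (zero_mul 0) (zero_mul 0)).one_notMem_span (gensY_subset_ann rfl)

theorem one_notMem_idealZ (hα : 0 < α) (hf : f = X * (X + C (α : k))) : 1 ∉ idealZ k f α :=
  (ofRoots hα hf 0 0 0 0 (zero_mul 0) (zero_mul 0)).one_notMem_span (gensZ_subset_ann rfl rfl)

variable [CharZero k]

theorem extOneDim_idealZ_idealX (hα : 0 < α) (hf : f = X * (X + C (α : k))) :
    ExtOneDim k f (idealZ k f α) 0 (idealX k f α) (-α) := by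
  refine extOneDim_of_exists_not_gradedSplits (G := gensX k f α) rfl gwaX_mem_gwaComp
    gwaX_mem_idealX (forall_mem_gensX.2
      ⟨.inl rfl, .inr ⟨0, gwaZ_sub_mem_gwaComp _, gwaMon_mem_idealZ (.inr (by omega))⟩⟩)
    gwaZ_sub_mem_idealX gwaZ_sub_mem_idealZ ?_
  set W := ofRoots hα hf 0 0 1 0 (zero_mul 0) (mul_zero 1) with hW
  have hact := W.act_gwaX_pow (-α) α
  rw [neg_add_cancel] at hact
  refine W.exists_not_gradedSplits (GS := gensX k f α) (GT := gensZ k f α) (h := 𝐱 ^ α) rfl rfl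
    gwaZ_sub_mem_idealX gwaZ_sub_mem_idealZ (one_notMem_idealX hα hf) gwaMon_mem_idealX_or
    gwaMon_mem_idealZ_or (gensZ_subset_ann rfl rfl) ?_ ?_ ?_ hact
    (forall_mem_gensX.2 ⟨⟨𝐲 ^ (α - 1), ?_⟩, 0, ?_⟩)
  · simpa using gwaX_pow_mem_gwaComp (k := k) (f := f) α
  · rw [← gwaMon_natCast]
    exact gwaMon_mem_idealX (by omega)
  · refine Finset.prod_ne_zero_iff.2 fun i hi => ?_
    rw [Finset.mem_range] at hi
    rcases Nat.eq_zero_or_pos i with rfl | hi0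
    · simp [hW, ofRoots_up_neg]
    · exact ofRoots_up_ne_zero (by omega) (by omega)
  · rw [act_gwaX, ofRoots_up_neg, act_gwaY_pow, Finset.prod_eq_one fun i hi => ?_]
    · congr 2
      omega
    · rw [Finset.mem_range] at hi
      exact ofRoots_down (by omega) (by omega)
  · rw [act_gwaZ_sub, act_zero]

theorem extOneDim_idealX_idealZ (hα : 0 < α) (hf : f = X * (X + C (α : k))) :
    ExtOneDim k f (idealX k f α) (-α) (idealZ k f α) 0 := by
  refine extOneDim_of_exists_not_gradedSplits (G := gensZ k f α) rfl (gwaY_pow_mem_gwaComp α)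
    gwaY_pow_mem_idealZ (forall_mem_gensZ.2
      ⟨.inl rfl, .inr ⟨1, gwaX_mem_gwaComp, gwaMon_mem_idealX (by omega)⟩,
        .inr ⟨0, gwaZ_sub_mem_gwaComp _, gwaMon_mem_idealX (by omega)⟩⟩)
    gwaZ_sub_mem_idealZ gwaZ_sub_mem_idealX ?_
  set W := ofRoots hα hf 0 0 0 1 (zero_mul 0) (zero_mul 1) with hW
  have hact := W.act_gwaY_pow 0 α
  rw [zero_sub] at hact
  refine W.exists_not_gradedSplits (GS := gensZ k f α) (GT := gensX k f α) (h := 𝐲 ^ α) rfl rfl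
    gwaZ_sub_mem_idealZ gwaZ_sub_mem_idealX (one_notMem_idealZ hα hf) gwaMon_mem_idealZ_or
    gwaMon_mem_idealX_or (gensX_subset_ann rfl) ?_ gwaY_pow_mem_idealZ ?_ hact
    (forall_mem_gensZ.2 ⟨⟨algebraMap k _ _, hact.trans (act_algebraMap _ _ _).symm⟩,
      ⟨0, ?_⟩, 0, ?_⟩)
  · simpa using gwaY_pow_mem_gwaComp (k := k) (f := f) α
  · refine Finset.prod_ne_zero_iff.2 fun i _ => ?_
    rcases eq_or_ne ((0 : ℤ) - i) (1 - α) with hi | hi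
    · simp [hi, hW, ofRoots_down_one_sub]
    · rw [ofRoots_down (by omega) hi]
      exact one_ne_zero
  · rw [act_gwaX, ofRoots_up_zero, zero_smul, act_zero]
  · rw [act_gwaZ_sub, act_zero]

theorem extOneDim_idealZ_idealY (hα : 0 < α) (hf : f = X * (X + C (α : k))) :
    ExtOneDim k f (idealZ k f α) 0 (idealY k f) 1 := by
  refine extOneDim_of_exists_not_gradedSplits (G := gensY k f) rfl gwaY_mem_gwaComp
    gwaY_mem_idealY (forall_mem_gensY.2
      ⟨.inl rfl, .inr ⟨0, gwaZ_sub_mem_gwaComp _, gwaMon_mem_idealZ (.inl (by omega))⟩⟩)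
    gwaZ_sub_mem_idealY gwaZ_sub_mem_idealZ ?_
  set W := ofRoots hα hf 0 1 0 0 (zero_mul 1) (zero_mul 0)
  have hact : W.act (Pi.single 1 1) 𝐲 = (1 : k) • Pi.single 0 1 := by
    rw [act_gwaY, ofRoots_down_one, sub_self]
  refine W.exists_not_gradedSplits (GS := gensY k f) (GT := gensZ k f α) (h := 𝐲) rfl rfl
    gwaZ_sub_mem_idealY gwaZ_sub_mem_idealZ (one_notMem_idealY hα hf) gwaMon_mem_idealY_or
    gwaMon_mem_idealZ_or (gensZ_subset_ann rfl rfl) gwaY_mem_gwaComp gwaY_mem_idealY one_ne_zero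
    hact (forall_mem_gensY.2 ⟨⟨1, ?_⟩, 0, ?_⟩)
  · rw [hact, act_one, one_smul]
  · rw [act_gwaZ_sub, act_zero]

theorem extOneDim_idealY_idealZ (hα : 0 < α) (hf : f = X * (X + C (α : k))) :
    ExtOneDim k f (idealY k f) 1 (idealZ k f α) 0 := by
  refine extOneDim_of_exists_not_gradedSplits (G := gensZ k f α) rfl gwaX_mem_gwaComp
    gwaX_mem_idealZ (forall_mem_gensZ.2
      ⟨.inr ⟨-α, gwaY_pow_mem_gwaComp α, gwaMon_mem_idealY (by omega)⟩, .inl rfl,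
        .inr ⟨0, gwaZ_sub_mem_gwaComp _, gwaMon_mem_idealY (by omega)⟩⟩)
    gwaZ_sub_mem_idealZ gwaZ_sub_mem_idealY ?_
  set W := ofRoots hα hf 1 0 0 0 (mul_zero 1) (zero_mul 0)
  have hact : W.act (Pi.single 0 1) 𝐱 = (1 : k) • Pi.single 1 1 := by
    rw [act_gwaX, ofRoots_up_zero, zero_add]
  refine W.exists_not_gradedSplits (GS := gensZ k f α) (GT := gensY k f) (h := 𝐱) rfl rfl
    gwaZ_sub_mem_idealZ gwaZ_sub_mem_idealY (one_notMem_idealZ hα hf) gwaMon_mem_idealZ_or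
    gwaMon_mem_idealY_or (gensY_subset_ann rfl) gwaX_mem_gwaComp gwaX_mem_idealZ one_ne_zero
    hact (forall_mem_gensZ.2 ⟨⟨0, ?_⟩, ⟨1, ?_⟩, 0, ?_⟩)
  · rw [act_zero]
    exact gwaY_pow_mem_ann rfl
  · rw [hact, act_one, one_smul]
  · rw [act_gwaZ_sub, act_zero]

end OneDimensional

end SimpleModules

set_option maxHeartbeats 1000000 in
/-- Let `α ∈ ℕ⁺`, `f = z(z+α)`.  With the integrally supported graded
simple modules `X = (A/(x,z+α)A)⟨−α⟩`, `Y = (A/(y,z−1)A)⟨1⟩` and `Z = A/(y^α,x,z)A`: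
`Ext¹_A(X,Y) = Ext¹_A(Y,X) = 0`; `Ext¹_A(S,S) = 0` for `S ∈ {X,Y,Z}`; and
`Ext¹_A(X,Z) = Ext¹_A(Z,X) = Ext¹_A(Y,Z) = Ext¹_A(Z,Y) = k`, concentrated in
degree `0`. -/
theorem ext_computations_congruent_root
    (k : Type) [Field k] [IsAlgClosed k] [CharZero k] (α : ℕ+) :
    letI f : Polynomial k := X * (X + C (α : k))
    letI A := GWA k f
    letI IX : Submodule Aᵐᵒᵖ A := Submodule.span Aᵐᵒᵖ
      {gwaX k f, gwaZ k f + algebraMap k A (α : k)}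
    letI IY : Submodule Aᵐᵒᵖ A := Submodule.span Aᵐᵒᵖ {gwaY k f, gwaZ k f - 1}
    letI IZ : Submodule Aᵐᵒᵖ A := Submodule.span Aᵐᵒᵖ
      {gwaY k f ^ (α : ℕ), gwaX k f, gwaZ k f}
    -- Ext¹(X,Y) = Ext¹(Y,X) = 0
    (ExtVanishes k f IY 1 IX (-(α : ℤ)) ∧ ExtVanishes k f IX (-(α : ℤ)) IY 1) ∧
    -- Ext¹(S,S) = 0 for S ∈ {X, Y, Z}
    (ExtVanishes k f IX (-(α : ℤ)) IX (-(α : ℤ)) ∧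
      ExtVanishes k f IY 1 IY 1 ∧ ExtVanishes k f IZ 0 IZ 0) ∧
    -- Ext¹(X,Z) = Ext¹(Z,X) = Ext¹(Y,Z) = Ext¹(Z,Y) = k, concentrated in degree 0
    (ExtOneDim k f IZ 0 IX (-(α : ℤ)) ∧ ExtOneDim k f IX (-(α : ℤ)) IZ 0 ∧
      ExtOneDim k f IZ 0 IY 1 ∧ ExtOneDim k f IY 1 IZ 0) := by
  have hα : 0 < (α : ℕ) := α.pos
  exact ⟨⟨extVanishes_idealY_idealX hα, extVanishes_idealX_idealY hα⟩,
    ⟨extVanishes_idealX_self hα rfl, extVanishes_idealY_self hα rfl,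
      extVanishes_idealZ_self hα rfl⟩,
    extOneDim_idealZ_idealX hα rfl, extOneDim_idealX_idealZ hα rfl,
    extOneDim_idealZ_idealY hα rfl, extOneDim_idealY_idealZ hα rfl⟩

end
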